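/- arXiv:math/0008224 — 6 statements merged into one kernel-verified Lean document; each statement's English description precedes it below -/
import Mathlib

section
/- Let R be an F-vector space with a linear operator ∂ and bilinear products u⁽ⁿ⁾v (n ∈ ℕ) satisfying locality, and suppose that for all u, v ∈ R and n ∈ ℕ both (∂u)⁽ⁿ⁾v = -n·(u⁽ⁿ⁻¹⁾v) and ∂(u⁽ⁿ⁾v) - u⁽ⁿ⁾(∂v) = (∂u)⁽ⁿ⁾v hold. Let V be a subspace of R with R = F[∂]V, i.e., R is spanned by the elements ∂^m(v) with m ∈ ℕ, v ∈ V. Then (R, ∂, products) is a conformal algebra (i.e., skew-symmetry and the Jacobi identity hold on all of R) if and only if skew-symmetry holds for all u, v ∈ V and the Jacobi identity holds for all u, v, w ∈ V. -/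
/-!
Each axiom is the vanishing of a multilinear defect: the Jacobiator is an endomorphism-valued
bilinear map, and the skew-symmetry defect, truncated at `N`, is a bilinear map.  Applying `∂` to
an argument of a defect again gives a combination of defects of the original arguments; in the
truncated case there is a boundary term, which locality kills once `N` is large.  The arguments at
which all defects vanish therefore form a `∂`-stable subspace, one argument at a time.
-/

open Filter Finset

section DiffSpan

variable {F R M ι α : Type*} [Semiring F] [AddCommMonoid R] [Module F R]
  [AddCommMonoid M] [Module F M] {D : R →ₗ[F] R} {s : Set R}

variable (D s) in
/-- The `F[∂]`-submodule generated by a set `s`, with `D = ∂`. -/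
def diffSpan : Submodule F R :=
  Submodule.span F {x : R | ∃ (m : ℕ) (v : R), v ∈ s ∧ x = (D ^ m) v}

theorem eventually_apply_eq_zero_of_diffSpan_eq_top (hspan : diffSpan D s = ⊤) {l : Filter α}
    {f : ι → α → R →ₗ[F] M} (hs : ∀ x ∈ s, ∀ i, ∀ᶠ a in l, f i a x = 0)
    (hD : ∀ x, (∀ i, ∀ᶠ a in l, f i a x = 0) → ∀ i, ∀ᶠ a in l, f i a (D x) = 0) (x : R) (i : ι) :
    ∀ᶠ a in l, f i a x = 0 := by
  have hx : x ∈ diffSpan D s := hspan ▸ Submodule.mem_top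
  induction hx using Submodule.span_induction generalizing i with
  | mem x hx =>
    obtain ⟨m, v, hv, rfl⟩ := hx
    induction m generalizing i with
    | zero => exact hs v hv i
    | succ m ih =>
      rw [pow_succ', Module.End.mul_apply]
      exact hD _ ih i
  | zero => simp
  | add x y _ _ hx hy => filter_upwards [hx i, hy i] with a hxa hya using by simp [hxa, hya]
  | smul c x _ hx => filter_upwards [hx i] with a hxa using by simp [hxa]

theorem eq_zero_of_diffSpan_eq_top (hspan : diffSpan D s = ⊤) {f : ι → α → R →ₗ[F] M}
    (hs : ∀ x ∈ s, ∀ i a, f i a x = 0)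
    (hD : ∀ x, (∀ i a, f i a x = 0) → ∀ i a, f i a (D x) = 0) (i : ι) (a : α) : f i a = 0 := by
  ext x
  refine eventually_top.1
    (eventually_apply_eq_zero_of_diffSpan_eq_top (l := ⊤) hspan ?_ ?_ x i) a
  all_goals simpa only [eventually_top]

end DiffSpan

/-- Sesquilinearity of the products `P n u v = u⁽ⁿ⁾v` with respect to `D = ∂`, together with the
statement that `∂` is a derivation of every product.  For `n = 0` the coefficient `-n` vanishes, so
the truncated index `n - 1` is harmless. -/
structure IsSesquilinear {F R : Type*} [CommRing F] [AddCommGroup R] [Module F R]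
    (D : R →ₗ[F] R) (P : ℕ → R →ₗ[F] R →ₗ[F] R) : Prop where
  map_left : ∀ (n : ℕ) (u : R), P n (D u) = -(n : F) • P (n - 1) u
  lie_product : ∀ (n : ℕ) (u : R), ⁅D, P n u⁆ = P n (D u)

section Jacobi

attribute [local instance] LieRing.ofAssociativeRing

variable {F R : Type*} [CommRing F] [AddCommGroup R] [Module F R]
  {D : R →ₗ[F] R} (P : ℕ → R →ₗ[F] R →ₗ[F] R)

/-- The right-hand side of the Jacobi identity, as an operator on the third argument. -/
def jacobiRhs (m n : ℕ) : R →ₗ[F] R →ₗ[F] Module.End F R :=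
  ∑ j ∈ range (m + 1), (m.choose j : F) • (P j).compr₂ (P (m + n - j))

/-- The defect of the Jacobi identity, as an operator on the third argument. -/
def jacobiator (m n : ℕ) : R →ₗ[F] R →ₗ[F] Module.End F R :=
  (LieAlgebra.ad F (Module.End F R)).toLinearMap.compl₁₂ (P m) (P n) - jacobiRhs P m n

theorem jacobiRhs_apply (m n : ℕ) (u v : R) :
    jacobiRhs P m n u v = ∑ j ∈ range (m + 1), (m.choose j : F) • P (m + n - j) (P j u v) := by
  simp [jacobiRhs, LinearMap.sum_apply]

theorem jacobiator_apply (m n : ℕ) (u v : R) :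
    jacobiator P m n u v = ⁅P m u, P n v⁆ - jacobiRhs P m n u v :=
  rfl

theorem jacobiator_apply_eq_zero_iff (m n : ℕ) (u v w : R) :
    jacobiator P m n u v w = 0 ↔ P m u (P n v w) - P n v (P m u w) =
      ∑ j ∈ range (m + 1), (m.choose j : F) • P (m + n - j) (P j u v) w := by
  rw [jacobiator_apply, jacobiRhs_apply, LinearMap.sub_apply, sub_eq_zero, Ring.lie_def]
  simp [LinearMap.sum_apply]

theorem smul_jacobiRhs_sub_one_left (m n : ℕ) (u v : R) :
    (m : F) • jacobiRhs P (m - 1) n u v =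
      ∑ j ∈ range (m + 1), (((m : F) - j) * m.choose j) • P (m + n - j - 1) (P j u v) := by
  cases m with
  | zero => simp
  | succ m =>
    rw [jacobiRhs_apply, sum_range_succ _ (m + 1), sub_self, zero_mul, zero_smul, add_zero,
      smul_sum]
    refine sum_congr rfl fun j hj => ?_
    have hjm : j ≤ m := mem_range_succ_iff.1 hj
    have hchoose : (m.choose j : F) * (m + 1) = (m + 1).choose j * (m + 1 - j) := by
      simpa [Nat.cast_sub (show j ≤ m + 1 by lia)] using
        congrArg (Nat.cast : ℕ → F) (Nat.choose_mul_succ_eq m j)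
    rw [show m + 1 - 1 + n - j = m + 1 + n - j - 1 by lia, Nat.add_sub_cancel, smul_smul]
    congr 1
    push_cast
    linear_combination hchoose

theorem smul_jacobiRhs_sub_one_right (m n : ℕ) (u v : R) :
    (n : F) • jacobiRhs P m (n - 1) u v =
      ∑ j ∈ range (m + 1), ((n : F) * m.choose j) • P (m + n - j - 1) (P j u v) := by
  cases n with
  | zero => simp
  | succ n =>
    rw [jacobiRhs_apply, smul_sum]
    refine sum_congr rfl fun j _ => ?_
    rw [smul_smul, show m + (n + 1 - 1) - j = m + (n + 1) - j - 1 by lia]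

variable {P}

namespace IsSesquilinear

theorem map_right (hP : IsSesquilinear D P) (n : ℕ) (u v : R) :
    P n u (D v) = D (P n u v) - P n (D u) v := by
  rw [← hP.lie_product, Ring.lie_def]
  simp

theorem jacobiRhs_map_left (hP : IsSesquilinear D P) (m n : ℕ) (u v : R) :
    jacobiRhs P m n (D u) v = -(m : F) • jacobiRhs P (m - 1) n u v := by
  cases m with
  | zero => simp [jacobiRhs_apply, hP.map_left]
  | succ m =>
    rw [jacobiRhs_apply, jacobiRhs_apply, sum_range_succ', smul_sum]
    simp only [hP.map_left, Nat.add_sub_cancel, Nat.cast_zero, neg_zero, zero_smul,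
      LinearMap.zero_apply, LinearMap.smul_apply, map_smul, map_zero, smul_zero, add_zero]
    refine sum_congr rfl fun j _ => ?_
    have hchoose : ((m : F) + 1) * m.choose j = (m + 1).choose (j + 1) * (j + 1) := by
      simpa using congrArg (Nat.cast : ℕ → F) (Nat.add_one_mul_choose_eq m j)
    rw [show m + 1 + n - (j + 1) = m + n - j by lia, smul_smul, smul_smul]
    congr 1
    push_cast
    linear_combination hchoose

theorem lie_jacobiRhs (hP : IsSesquilinear D P) (m n : ℕ) (u v : R) :
    ⁅D, jacobiRhs P m n u v⁆ = jacobiRhs P m n (D u) v + jacobiRhs P m n u (D v) := by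
  simp only [jacobiRhs_apply, lie_sum, lie_smul, hP.lie_product, ← sum_add_distrib, ← smul_add,
    ← map_add, hP.map_right, add_sub_cancel]

theorem jacobiRhs_map_right (hP : IsSesquilinear D P) (m n : ℕ) (u v : R) :
    jacobiRhs P m n u (D v) = -(n : F) • jacobiRhs P m (n - 1) u v := by
  have hderiv : jacobiRhs P m n u (D v) = ⁅D, jacobiRhs P m n u v⁆ - jacobiRhs P m n (D u) v := by
    rw [hP.lie_jacobiRhs, add_sub_cancel_left]
  have hlie : ⁅D, jacobiRhs P m n u v⁆ = ∑ j ∈ range (m + 1),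
      (-((m : F) + n - j) * m.choose j) • P (m + n - j - 1) (P j u v) := by
    simp only [jacobiRhs_apply, lie_sum, lie_smul, hP.lie_product, hP.map_left, smul_smul]
    refine sum_congr rfl fun j hj => ?_
    rw [Nat.cast_sub (by have := mem_range.1 hj; lia), mul_comm, Nat.cast_add]
  rw [hderiv, hlie, hP.jacobiRhs_map_left, neg_smul, neg_smul, smul_jacobiRhs_sub_one_left,
    smul_jacobiRhs_sub_one_right, sub_neg_eq_add, ← sum_add_distrib, ← sum_neg_distrib]
  refine sum_congr rfl fun j _ => ?_
  module

theorem jacobiator_map_left (hP : IsSesquilinear D P) (m n : ℕ) (u : R) :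
    jacobiator P m n (D u) = -(m : F) • jacobiator P (m - 1) n u := by
  ext1 v
  rw [LinearMap.smul_apply, jacobiator_apply, jacobiator_apply, hP.map_left,
    hP.jacobiRhs_map_left, smul_lie, smul_sub]

theorem jacobiator_map_right (hP : IsSesquilinear D P) (m n : ℕ) (u v : R) :
    jacobiator P m n u (D v) = -(n : F) • jacobiator P m (n - 1) u v := by
  rw [jacobiator_apply, jacobiator_apply, hP.map_left, hP.jacobiRhs_map_right, lie_smul, smul_sub]

theorem lie_jacobiator (hP : IsSesquilinear D P) (m n : ℕ) (u v : R) :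
    ⁅D, jacobiator P m n u v⁆ = jacobiator P m n (D u) v + jacobiator P m n u (D v) := by
  simp only [jacobiator_apply, lie_sub, leibniz_lie, hP.lie_product, hP.lie_jacobiRhs]
  abel

theorem jacobiator_apply_map (hP : IsSesquilinear D P) (m n : ℕ) (u v w : R) :
    jacobiator P m n u v (D w) = D (jacobiator P m n u v w) +
      (m : F) • jacobiator P (m - 1) n u v w + (n : F) • jacobiator P m (n - 1) u v w := by
  have hlie := LinearMap.congr_fun (hP.lie_jacobiator m n u v) w
  rw [hP.jacobiator_map_left, LinearMap.smul_apply, hP.jacobiator_map_right, Ring.lie_def] at hlie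
  simp only [LinearMap.sub_apply, LinearMap.add_apply, LinearMap.smul_apply,
    Module.End.mul_apply, sub_eq_iff_eq_add] at hlie
  rw [hlie]
  module

theorem jacobiator_eq_zero (hP : IsSesquilinear D P) {s : Set R} (hspan : diffSpan D s = ⊤)
    (h : ∀ m n, ∀ u ∈ s, ∀ v ∈ s, ∀ w ∈ s, jacobiator P m n u v w = 0) (m n : ℕ) :
    jacobiator P m n = 0 := by
  have vanish_third : ∀ u ∈ s, ∀ v ∈ s, ∀ m n, jacobiator P m n u v = 0 := fun u hu v hv =>
    eq_zero_of_diffSpan_eq_top hspan (fun w hw m n => h m n u hu v hv w hw)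
      fun w hw m n => by simp [hP.jacobiator_apply_map, hw]
  have vanish_second : ∀ u ∈ s, ∀ m n, jacobiator P m n u = 0 := fun u hu =>
    eq_zero_of_diffSpan_eq_top hspan (vanish_third u hu)
      fun v hv m n => by simp [hP.jacobiator_map_right, hv]
  exact eq_zero_of_diffSpan_eq_top hspan vanish_second
    (fun u hu m n => by simp [hP.jacobiator_map_left, hu]) m n

end IsSesquilinear

end Jacobi

section SkewSymmetry

variable {F R : Type*} [Field F] [AddCommGroup R] [Module F R]
  (D : R →ₗ[F] R) (P : ℕ → R →ₗ[F] R →ₗ[F] R)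

/-- The right-hand side of skew-symmetry, truncated to its first `N` terms. -/
def skewRhs (n N : ℕ) : R →ₗ[F] R →ₗ[F] R :=
  ∑ j ∈ range N, ((-1 : F) ^ (n + j + 1) * (j.factorial : F)⁻¹) •
    (P (n + j)).flip.compr₂ (D ^ j)

/-- The defect of skew-symmetry for the truncated right-hand side. -/
def skewDefect (n N : ℕ) : R →ₗ[F] R →ₗ[F] R :=
  P n - skewRhs D P n N

/-- Skew-symmetry of `u` and `v`: for each `n`, the defect vanishes for every late enough
truncation.  Unlike the axiom, where `N` must bound the nonzero products of the given pair, this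
condition is visibly stable under linear combinations in either argument. -/
def SkewSymmetricAt (u v : R) : Prop :=
  ∀ n, ∀ᶠ N in atTop, skewDefect D P n N u v = 0

theorem skewRhs_apply (n N : ℕ) (u v : R) :
    skewRhs D P n N u v = ∑ j ∈ range N,
      ((-1 : F) ^ (n + j + 1) * (j.factorial : F)⁻¹) • (D ^ j) (P (n + j) v u) := by
  simp [skewRhs, LinearMap.sum_apply]

theorem skewDefect_apply (n N : ℕ) (u v : R) :
    skewDefect D P n N u v = P n u v - skewRhs D P n N u v :=
  rfl

variable {D P}

theorem skewRhs_eq_of_le {n N M : ℕ} {u v : R} (hN : ∀ j ≥ N, P (n + j) v u = 0) (hNM : N ≤ M) :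
    skewRhs D P n M u v = skewRhs D P n N u v := by
  rw [skewRhs_apply, skewRhs_apply]
  refine (sum_subset (range_mono hNM) fun j _ hj => ?_).symm
  rw [hN j (by simpa using hj), map_zero, smul_zero]

theorem skewSymmetricAt_iff {u v : R} (hloc : ∀ᶠ n in atTop, P n v u = 0) :
    SkewSymmetricAt D P u v ↔ ∀ n N, (∀ j ≥ N, P (n + j) v u = 0) →
      P n u v = ∑ j ∈ range N,
        ((-1 : F) ^ (n + j + 1) * (j.factorial : F)⁻¹) • (D ^ j) (P (n + j) v u) := by
  simp only [SkewSymmetricAt, skewDefect_apply, sub_eq_zero, ← skewRhs_apply]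
  constructor
  · intro h n N hN
    obtain ⟨M, hM, hNM⟩ := ((h n).and (eventually_ge_atTop N)).exists
    rw [hM, skewRhs_eq_of_le hN hNM]
  · intro h n
    obtain ⟨N, hN⟩ := eventually_atTop.1 hloc
    filter_upwards [eventually_ge_atTop N] with M hM
    exact h n M fun j hj => hN _ (by lia)

namespace IsSesquilinear

theorem skewRhs_map_left [CharZero F] (hP : IsSesquilinear D P) (n N : ℕ) (u v : R) :
    skewRhs D P n (N + 1) (D u) v = -(n : F) • skewRhs D P (n - 1) (N + 1) u v +
      ((-1 : F) ^ (n + N + 1) * (N.factorial : F)⁻¹) • (D ^ (N + 1)) (P (n + N) v u) := by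
  induction N with
  | zero =>
    simp only [skewRhs_apply, zero_add, sum_range_one, hP.map_right, hP.map_left]
    cases n with
    | zero => simp
    | succ n =>
      simp only [add_zero, Nat.add_sub_cancel, pow_zero, Module.End.one_apply, pow_one,
        LinearMap.smul_apply]
      module
  | succ N ih =>
    have hpow (x : R) : (D ^ (N + 1)) (D x) = (D ^ (N + 1 + 1)) x := by
      rw [pow_succ D (N + 1), Module.End.mul_apply]
    have hN : (N.factorial : F) ≠ 0 := mod_cast N.factorial_ne_zero
    have hN' : (N : F) + 1 ≠ 0 := mod_cast N.succ_ne_zero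
    rw [skewRhs_apply, sum_range_succ, ← skewRhs_apply, ih, skewRhs_apply (N := N + 1 + 1),
      sum_range_succ, ← skewRhs_apply, hP.map_right, hP.map_left, map_sub, hpow,
      LinearMap.smul_apply, map_smul, Nat.factorial_succ]
    cases n with
    | zero =>
      rw [show 0 + (N + 1) - 1 = 0 + N by lia]
      push_cast
      match_scalars <;> field_simp
      all_goals ring
    | succ n =>
      rw [show n + 1 + (N + 1) - 1 = n + 1 + N by lia,
        show n + 1 - 1 + (N + 1) = n + 1 + N by lia]
      push_cast
      match_scalars <;> field_simp
      ring

theorem skewDefect_map_left [CharZero F] (hP : IsSesquilinear D P) (n N : ℕ) (u v : R) :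
    skewDefect D P n (N + 1) (D u) v = -(n : F) • skewDefect D P (n - 1) (N + 1) u v -
      ((-1 : F) ^ (n + N + 1) * (N.factorial : F)⁻¹) • (D ^ (N + 1)) (P (n + N) v u) := by
  rw [skewDefect_apply, skewDefect_apply, hP.skewRhs_map_left, hP.map_left, LinearMap.smul_apply]
  module

theorem skewRhs_map_right (hP : IsSesquilinear D P) (n N : ℕ) (u v : R) :
    skewRhs D P n N u (D v) = D (skewRhs D P n N u v) - skewRhs D P n N (D u) v := by
  simp only [skewRhs_apply, map_sum, map_smul, ← sum_sub_distrib, ← smul_sub]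
  refine sum_congr rfl fun j _ => ?_
  rw [← Module.End.mul_apply D, ← pow_succ', pow_succ D, Module.End.mul_apply, ← map_sub,
    hP.map_right, sub_sub_cancel]

theorem skewDefect_map_right (hP : IsSesquilinear D P) (n N : ℕ) (u v : R) :
    skewDefect D P n N u (D v) = D (skewDefect D P n N u v) - skewDefect D P n N (D u) v := by
  simp only [skewDefect_apply, hP.map_right, hP.skewRhs_map_right, map_sub]
  abel

theorem skewSymmetricAt_map_left [CharZero F] (hP : IsSesquilinear D P) {u v : R}
    (hloc : ∀ᶠ n in atTop, P n v u = 0) (h : SkewSymmetricAt D P u v) :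
    SkewSymmetricAt D P (D u) v := by
  intro n
  obtain ⟨K, hK⟩ := eventually_atTop.1 hloc
  filter_upwards [h (n - 1), eventually_ge_atTop (K + 1)] with N hN hKN
  obtain ⟨N, rfl⟩ := Nat.exists_eq_add_one.2 (show 0 < N by lia)
  rw [hP.skewDefect_map_left, hN, hK (n + N) (by lia)]
  simp only [map_zero, smul_zero, sub_zero]

theorem skewSymmetricAt_map_right [CharZero F] (hP : IsSesquilinear D P) {u v : R}
    (hloc : ∀ᶠ n in atTop, P n v u = 0) (h : SkewSymmetricAt D P u v) :
    SkewSymmetricAt D P u (D v) := by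
  intro n
  filter_upwards [h n, hP.skewSymmetricAt_map_left hloc h n] with N hN hN'
  rw [hP.skewDefect_map_right, hN, hN', map_zero, sub_zero]

theorem skewSymmetricAt [CharZero F] (hP : IsSesquilinear D P)
    (hloc : ∀ u v : R, ∀ᶠ n in atTop, P n u v = 0) {s : Set R} (hspan : diffSpan D s = ⊤)
    (h : ∀ u ∈ s, ∀ v ∈ s, SkewSymmetricAt D P u v) (u v : R) : SkewSymmetricAt D P u v := by
  have skew_right : ∀ u ∈ s, ∀ v, SkewSymmetricAt D P u v := fun u hu =>
    eventually_apply_eq_zero_of_diffSpan_eq_top hspan (f := fun n N => skewDefect D P n N u)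
      (h u hu) fun v hv => hP.skewSymmetricAt_map_right (hloc v u) hv
  exact eventually_apply_eq_zero_of_diffSpan_eq_top hspan
    (f := fun n N => (skewDefect D P n N).flip v) (fun u hu => skew_right u hu v)
    (fun u hu => hP.skewSymmetricAt_map_left (hloc v u) hu) u

end IsSesquilinear

end SkewSymmetry

theorem conformal_axioms_iff_on_spanning_subspace_general
    {F R : Type*} [Field F] [CharZero F] [AddCommGroup R] [Module F R]
    (D : R →ₗ[F] R) (P : ℕ → R →ₗ[F] R →ₗ[F] R)
    (locality : ∀ u v : R, ∃ N : ℕ, ∀ n ≥ N, P n u v = 0)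
    (sesqui_zero : ∀ u v : R, P 0 (D u) v = 0)
    (sesqui : ∀ (n : ℕ) (u v : R), P (n + 1) (D u) v = -(((n + 1 : ℕ) : F)) • P n u v)
    (deriv : ∀ (n : ℕ) (u v : R), D (P n u v) - P n u (D v) = P n (D u) v)
    (s : Set R)
    (hspan : Submodule.span F {x : R | ∃ (m : ℕ) (v : R), v ∈ s ∧ x = (D ^ m) v} = ⊤) :
    ((∀ (n N : ℕ) (u v : R), (∀ j ≥ N, P (n + j) v u = 0) →
        P n u v = ∑ j ∈ Finset.range N,
          ((-1 : F) ^ (n + j + 1) * ((j.factorial : F)⁻¹)) • ((D ^ j) (P (n + j) v u))) ∧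
      (∀ (m n : ℕ) (u v w : R),
        P m u (P n v w) - P n v (P m u w) =
          ∑ j ∈ Finset.range (m + 1), ((m.choose j : F)) • P (m + n - j) (P j u v) w))
    ↔
    ((∀ (n N : ℕ), ∀ u ∈ s, ∀ v ∈ s, (∀ j ≥ N, P (n + j) v u = 0) →
        P n u v = ∑ j ∈ Finset.range N,
          ((-1 : F) ^ (n + j + 1) * ((j.factorial : F)⁻¹)) • ((D ^ j) (P (n + j) v u))) ∧
      (∀ (m n : ℕ), ∀ u ∈ s, ∀ v ∈ s, ∀ w ∈ s,
        P m u (P n v w) - P n v (P m u w) =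
          ∑ j ∈ Finset.range (m + 1), ((m.choose j : F)) • P (m + n - j) (P j u v) w)) := by
  have hP : IsSesquilinear D P :=
    { map_left := fun n u => by
        ext v
        cases n <;> simp [sesqui_zero, sesqui]
      lie_product := fun n u => by
        ext v
        simp [Ring.lie_def, deriv] }
  have hloc : ∀ u v, ∀ᶠ n in atTop, P n u v = 0 := fun u v => eventually_atTop.2 (locality u v)
  refine ⟨fun ⟨hS, hJ⟩ => ⟨fun n N u _ v _ => hS n N u v, fun m n u _ v _ w _ => hJ m n u v w⟩,
    fun ⟨hS, hJ⟩ => ⟨fun n N u v => ?_, fun m n u v w => ?_⟩⟩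
  · have hskew := hP.skewSymmetricAt hloc hspan fun u hu v hv =>
      (skewSymmetricAt_iff (hloc v u)).2 fun n N => hS n N u hu v hv
    exact (skewSymmetricAt_iff (hloc v u)).1 (hskew u v) n N
  · have hjac := hP.jacobiator_eq_zero hspan fun m n u hu v hv w hw =>
      (jacobiator_apply_eq_zero_iff P m n u v w).2 (hJ m n u hu v hv w hw)
    rw [← jacobiator_apply_eq_zero_iff, hjac m n]
    rfl

/-- **Kac's theorem** (Theorem 2.1): let `R` be an `F`-vector space with a linear
operator `D = ∂` and bilinear `n`-th products `P n` satisfying locality,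
sesquilinearity in the first argument, and the derivation rule
`∂(u⁽ⁿ⁾v) - u⁽ⁿ⁾(∂v) = (∂u)⁽ⁿ⁾v`.  If `V` is a subspace with `R = F[∂]V`
(i.e. the elements `∂^m v`, `v ∈ V`, span `R`), then skew-symmetry and the
Jacobi identity hold on all of `R` if and only if they hold for elements of `V`. -/
theorem conformal_axioms_iff_on_spanning_subspace
    {F R : Type*} [Field F] [CharZero F] [AddCommGroup R] [Module F R]
    (D : R →ₗ[F] R) (P : ℕ → R →ₗ[F] R →ₗ[F] R)
    (locality : ∀ u v : R, ∃ N : ℕ, ∀ n ≥ N, P n u v = 0)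
    (sesqui_zero : ∀ u v : R, P 0 (D u) v = 0)
    (sesqui : ∀ (n : ℕ) (u v : R), P (n + 1) (D u) v = -(((n + 1 : ℕ) : F)) • P n u v)
    (deriv : ∀ (n : ℕ) (u v : R), D (P n u v) - P n u (D v) = P n (D u) v)
    (V : Submodule F R)
    (hspan : Submodule.span F {x : R | ∃ (m : ℕ) (v : R), v ∈ V ∧ x = (D ^ m) v} = ⊤) :
    ((∀ (n N : ℕ) (u v : R), (∀ j ≥ N, P (n + j) v u = 0) →
        P n u v = ∑ j ∈ Finset.range N,
          ((-1 : F) ^ (n + j + 1) * ((j.factorial : F)⁻¹)) • ((D ^ j) (P (n + j) v u))) ∧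
      (∀ (m n : ℕ) (u v w : R),
        P m u (P n v w) - P n v (P m u w) =
          ∑ j ∈ Finset.range (m + 1), ((m.choose j : F)) • P (m + n - j) (P j u v) w))
    ↔
    ((∀ (n N : ℕ), ∀ u ∈ V, ∀ v ∈ V, (∀ j ≥ N, P (n + j) v u = 0) →
        P n u v = ∑ j ∈ Finset.range N,
          ((-1 : F) ^ (n + j + 1) * ((j.factorial : F)⁻¹)) • ((D ^ j) (P (n + j) v u))) ∧
      (∀ (m n : ℕ), ∀ u ∈ V, ∀ v ∈ V, ∀ w ∈ V,
        P m u (P n v w) - P n v (P m u w) =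
          ∑ j ∈ Finset.range (m + 1), ((m.choose j : F)) • P (m + n - j) (P j u v) w)) :=
  conformal_axioms_iff_on_spanning_subspace_general D P locality sesqui_zero sesqui deriv V hspan
end

section
/- The triple (R_{k×k}, ∂, products) defined from the k×k matrix algebra is a conformal algebra: the explicitly defined ∂ and n-th products on A ⊗ F[t₁,t₂] satisfy locality, sesquilinearity, skew-symmetry, and the Jacobi identity. -/
/-- The carrier of `R_{k×k} = M_k(F) ⊗ F[t₁,t₂]`: the element `u(m,n) = u ⊗ t₁^m t₂^n`
is encoded as `Finsupp.single (m, n) u`. -/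
abbrev MatCarrier (F : Type*) [Field F] (k : ℕ) :=
  (ℕ × ℕ) →₀ Matrix (Fin k) (Fin k) F

/-- The operator `∂` on `R_{k×k}`:
`∂(u(m,n)) = (m+1)·u(m+1,n) + (n+1)·u(m,n+1)`. -/
noncomputable def mD (F : Type*) [Field F] (k : ℕ) :
    MatCarrier F k → MatCarrier F k :=
  fun f => f.sum fun p u =>
    (((p.1 + 1 : ℕ) : F)) • Finsupp.single (p.1 + 1, p.2) u +
    (((p.2 + 1 : ℕ) : F)) • Finsupp.single (p.1, p.2 + 1) u

/-- The `s`-th product on `R_{k×k}`: the coefficient of `z^{-s-1}` in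
`Y⁺(u(m₁,m₂),z)(v(n₁,n₂)) =
  binom(-n₁-1,m₂)·Σ_p binom(p,m₁)·(uv)(p,n₂)·z^{p-m₁-m₂-n₁-1}
  - binom(-n₂-1,m₁)·Σ_q binom(q,m₂)·(vu)(n₁,q)·z^{q-m₁-m₂-n₂-1}`,
extended bilinearly, where `binom(-a-1,b) = (-1)^b·binom(a+b,b)`. -/
noncomputable def mProd (F : Type*) [Field F] (k : ℕ) (s : ℕ)
    (f g : MatCarrier F k) : MatCarrier F k :=
  f.sum fun p u => g.sum fun q v =>
    (if s ≤ p.1 + p.2 + q.1 then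
      ((-1 : F) ^ p.2 * ((q.1 + p.2).choose p.2 : F) *
        ((p.1 + p.2 + q.1 - s).choose p.1 : F)) •
        Finsupp.single (p.1 + p.2 + q.1 - s, q.2) (u * v)
     else 0) -
    (if s ≤ p.1 + p.2 + q.2 then
      ((-1 : F) ^ p.1 * ((q.2 + p.1).choose p.1 : F) *
        ((p.1 + p.2 + q.2 - s).choose p.2 : F)) •
        Finsupp.single (q.1, p.1 + p.2 + q.2 - s) (v * u)
     else 0)

/-- The weight space `R_{k×k}^{(n)} = span{u(m₁,m₂) : m₁ + m₂ + 1 = n}`. -/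
noncomputable def mWeight (F : Type*) [Field F] (k : ℕ) (n : ℕ) :
    Submodule F (MatCarrier F k) :=
  Submodule.span F {x | ∃ (u : Matrix (Fin k) (Fin k) F) (m₁ m₂ : ℕ),
    m₁ + m₂ + 1 = n ∧ x = Finsupp.single (m₁, m₂) u}

/-!
Encode `f = ∑ uₘₙ t₁ ^ m t₂ ^ n` in `A[t₁, t₂]` by its exponential generating function
`f̂ (a, b) = ∑ (a ^ m / m!) (b ^ n / n!) uₘₙ`. Then `∂` becomes multiplication by `a + b`, and the
`λ`-bracket `∑ (λ ^ n / n!) f⁽ⁿ⁾g` becomes the commutator of translated kernels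
`f̂ (a, -a - λ) ĝ (a + λ, b) - ĝ (a, b + λ) f̂ (-b - λ, b)`.
In this form sesquilinearity, skew-symmetry and the Jacobi identity for the `λ`-bracket follow by
comparing arguments, using only associativity of `A`. In characteristic zero a finitely supported
sequence is determined by the values of its exponential generating function, so the axioms for the
individual products are recovered by comparing coefficients.
-/

namespace ConformalAlgebra

open Finset
open scoped Nat

section DivPow

variable {F : Type*} [Field F]

/-- The divided power `x ^ n / n!`. -/
def divPow (x : F) (n : ℕ) : F := x ^ n / n !

@[simp]
lemma divPow_zero_right (x : F) : divPow x 0 = 1 := by simp [divPow]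

lemma divPow_neg (x : F) (n : ℕ) : divPow (-x) n = (-1) ^ n * divPow x n := by
  rw [divPow, divPow, neg_pow, mul_div_assoc]

variable [CharZero F]

lemma succ_mul_divPow_succ (x : F) (n : ℕ) :
    ((n + 1 : ℕ) : F) * divPow x (n + 1) = x * divPow x n := by
  have hn : ((n + 1 : ℕ) : F) ≠ 0 := Nat.cast_ne_zero.2 n.succ_ne_zero
  rw [divPow, divPow, Nat.factorial_succ, Nat.cast_mul, pow_succ']
  field_simp

lemma divPow_mul_divPow (x : F) (m n : ℕ) :
    divPow x m * divPow x n = (m + n).choose m * divPow x (m + n) := by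
  have h := (Nat.cast_ne_zero (R := F)).2 (m + n).factorial_ne_zero
  rw [divPow, divPow, divPow, Nat.cast_add_choose, pow_add]
  field_simp

lemma divPow_add (x y : F) (n : ℕ) :
    divPow (x + y) n = ∑ p ∈ antidiagonal n, divPow x p.1 * divPow y p.2 := by
  rw [divPow, (Commute.all x y).add_pow', sum_div]
  refine sum_congr rfl fun p hp => ?_
  have h := (Nat.cast_ne_zero (R := F)).2 n.factorial_ne_zero
  rw [← mem_antidiagonal.1 hp] at h ⊢
  rw [divPow, divPow, nsmul_eq_mul, Nat.cast_add_choose]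
  field_simp

lemma divPow_mul_divPow_neg_sub_mul_divPow_add (x a : F) (m₁ m₂ n : ℕ) :
    divPow a m₁ * divPow (-a - x) m₂ * divPow (a + x) n =
      ∑ r ∈ antidiagonal (n + m₂), (-1) ^ m₂ * ((n + m₂).choose m₂ : F) *
        ((m₁ + r.2).choose m₁ : F) * (divPow x r.1 * divPow a (m₁ + r.2)) := by
  calc
    _ = (-1) ^ m₂ * divPow a m₁ * (divPow (x + a) m₂ * divPow (x + a) n) := by
      rw [show -a - x = -(x + a) by ring, divPow_neg, add_comm a x]
      ring
    _ = (-1) ^ m₂ * ((n + m₂).choose m₂ : F) * divPow a m₁ *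
        ∑ r ∈ antidiagonal (n + m₂), divPow x r.1 * divPow a r.2 := by
      rw [divPow_mul_divPow, add_comm m₂, ← divPow_add]
      ring
    _ = _ := by
      rw [mul_sum]
      refine sum_congr rfl fun r _ => ?_
      linear_combination (-1) ^ m₂ * ((n + m₂).choose m₂ : F) * divPow x r.1 *
        divPow_mul_divPow a m₁ r.2

end DivPow

section ExpEval

variable {F V W : Type*} [Field F] [AddCommGroup V] [Module F V] [AddCommGroup W] [Module F W]

/-- The value at `x` of the exponential generating function `∑ n, (x ^ n / n!) • c n` of a finitely
supported sequence `c`. -/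
noncomputable def expEval (x : F) : (ℕ →₀ V) →ₗ[F] V :=
  Finsupp.lsum F fun n => divPow x n • LinearMap.id

@[simp]
lemma expEval_single (x : F) (n : ℕ) (v : V) :
    expEval x (Finsupp.single n v) = divPow x n • v := by
  simp [expEval]

lemma expEval_eq_sum_range (x : F) {N : ℕ} {c : ℕ →₀ V} (hc : ∀ n ≥ N, c n = 0) :
    expEval x c = ∑ n ∈ range N, divPow x n • c n := by
  have hsupp : c.support ⊆ range N := fun n hn =>
    mem_range.2 (not_le.1 fun h => Finsupp.mem_support_iff.1 hn (hc n h))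
  rw [expEval, Finsupp.lsum_apply, Finsupp.sum_of_support_subset c hsupp _ (by simp)]
  rfl

lemma map_expEval (T : V →ₗ[F] W) (x : F) (c : ℕ →₀ V) :
    T (expEval x c) = expEval x (Finsupp.mapRange.linearMap T c) := by
  suffices h : T ∘ₗ expEval x = expEval x ∘ₗ Finsupp.mapRange.linearMap T from
    LinearMap.congr_fun h c
  exact Finsupp.lhom_ext fun n v => by simp

lemma eq_zero_of_expEval_eq_zero [CharZero F] {c : ℕ →₀ V} (h : ∀ x : F, expEval x c = 0) :
    c = 0 := by
  ext n
  refine (Module.forall_dual_apply_eq_zero_iff F _).1 fun ℓ => ?_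
  -- The functional `ℓ` turns `c` into a polynomial vanishing on the infinite field `F`.
  let P : Polynomial F := ∑ i ∈ c.support, Polynomial.monomial i (ℓ (c i) / i !)
  have hP : P = 0 := Polynomial.funext fun x => by
    have := congrArg ℓ (h x)
    simp only [expEval, Finsupp.lsum_apply, Finsupp.sum, map_sum, LinearMap.smul_apply,
      LinearMap.id_apply, map_smul, map_zero, smul_eq_mul] at this
    rw [Polynomial.eval_zero, ← this, Polynomial.eval_finsetSum]
    refine sum_congr rfl fun i _ => ?_
    rw [Polynomial.eval_monomial, divPow]
    ring
  have hcoeff : ℓ (c n) / n ! = 0 := by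
    have := congrArg (Polynomial.coeff · n) hP
    by_cases hn : c n = 0
    · simp [hn]
    · simpa [P, Polynomial.finsetSum_coeff, Polynomial.coeff_monomial, hn] using this
  exact (div_eq_zero_iff.1 hcoeff).resolve_right (Nat.cast_ne_zero.2 n.factorial_ne_zero)

lemma eq_of_expEval_eq [CharZero F] {c d : ℕ →₀ V} (h : ∀ x : F, expEval x c = expEval x d) :
    c = d :=
  sub_eq_zero.1 <| eq_zero_of_expEval_eq_zero fun x => by rw [map_sub, h, sub_self]

/-- The two-variable analogue of `expEval`: the value at `(x, y)` of the exponential generating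
function `∑ (m, n), (x ^ m / m! * y ^ n / n!) • c (m, n)`. -/
noncomputable def expEval₂ (x y : F) : (ℕ × ℕ →₀ V) →ₗ[F] V :=
  expEval y ∘ₗ expEval x ∘ₗ (Finsupp.curryLinearEquiv F).toLinearMap

@[simp]
lemma expEval₂_single (x y : F) (p : ℕ × ℕ) (v : V) :
    expEval₂ x y (Finsupp.single p v) = (divPow x p.1 * divPow y p.2) • v := by
  simp [expEval₂, Finsupp.curryLinearEquiv, smul_smul, mul_comm]

lemma expEval₂_uncurry (x y : F) (c : ℕ →₀ ℕ →₀ V) :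
    expEval₂ x y c.uncurry = expEval y (expEval x c) := by
  simp [expEval₂, Finsupp.curryLinearEquiv]

lemma eq_of_expEval₂_eq [CharZero F] {c d : ℕ × ℕ →₀ V}
    (h : ∀ x y : F, expEval₂ x y c = expEval₂ x y d) : c = d :=
  (Finsupp.curryLinearEquiv F).injective <|
    eq_of_expEval_eq fun x => eq_of_expEval_eq fun y => h x y

end ExpEval

section Substitution

variable {F V : Type*} [Field F] [AddCommGroup V] [Module F V]

variable (F) in
/-- Multiplication of the exponential generating function by its variable. -/
noncomputable def mulVar : (ℕ →₀ V) →ₗ[F] (ℕ →₀ V) :=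
  Finsupp.lsum F fun n => ((n + 1 : ℕ) : F) • Finsupp.lsingle (n + 1)

/-- The substitution of `a * x` for the variable `x` of the exponential generating function. -/
noncomputable def rescale (a : F) : (ℕ →₀ V) →ₗ[F] (ℕ →₀ V) :=
  Finsupp.lsum F fun n => a ^ n • Finsupp.lsingle n

variable (F) in
/-- The exchange of the two variables. -/
noncomputable def swap : (ℕ × ℕ →₀ V) →ₗ[F] (ℕ × ℕ →₀ V) :=
  (Finsupp.domLCongr (Equiv.prodComm ℕ ℕ)).toLinearMap

variable (F) in
/-- The substitution `(x, y) ↦ (x, x + y)` in the two-variable exponential generating function. -/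
noncomputable def shear : (ℕ × ℕ →₀ V) →ₗ[F] (ℕ × ℕ →₀ V) :=
  Finsupp.lsum F fun p => ∑ q ∈ antidiagonal p.2,
    ((p.1 + q.1).choose p.1 : F) • Finsupp.lsingle (p.1 + q.1, q.2)

variable (F) in
/-- The array `(m, n) ↦ c (m + n)`, obtained by shearing an array supported on the first row. -/
noncomputable def hankel : (ℕ →₀ V) →ₗ[F] (ℕ × ℕ →₀ V) :=
  shear F ∘ₗ Finsupp.lmapDomain V F (Prod.mk 0)

/-- The substitution of `x + y` for the variable `x` of the exponential generating function. -/
noncomputable def translate (y : F) : (ℕ →₀ V) →ₗ[F] (ℕ →₀ V) :=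
  expEval y ∘ₗ (Finsupp.curryLinearEquiv F).toLinearMap ∘ₗ hankel F

lemma mulVar_apply_zero (c : ℕ →₀ V) : mulVar F c 0 = 0 := by
  induction c using Finsupp.induction_linear <;> simp_all [mulVar]

lemma mulVar_apply_succ (c : ℕ →₀ V) (n : ℕ) :
    mulVar F c (n + 1) = ((n + 1 : ℕ) : F) • c n := by
  induction c using Finsupp.induction_linear with
  | zero => simp
  | add c d hc hd => simp only [map_add, Finsupp.add_apply, hc, hd, smul_add]
  | single m v => obtain rfl | h := eq_or_ne m n <;> simp [mulVar, *]

lemma expEval_mulVar [CharZero F] (x : F) (c : ℕ →₀ V) :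
    expEval x (mulVar F c) = x • expEval x c := by
  suffices h : expEval x ∘ₗ mulVar F = x • expEval (V := V) x from LinearMap.congr_fun h c
  refine Finsupp.lhom_ext fun n v => ?_
  simp only [mulVar, LinearMap.comp_apply, Finsupp.lsum_single, LinearMap.smul_apply,
    Finsupp.lsingle_apply, map_smul, expEval_single, smul_smul, succ_mul_divPow_succ]

lemma rescale_apply (a : F) (c : ℕ →₀ V) (n : ℕ) : rescale a c n = a ^ n • c n := by
  induction c using Finsupp.induction_linear with
  | zero => simp
  | add c d hc hd => simp only [map_add, Finsupp.add_apply, hc, hd, smul_add]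
  | single m v => obtain rfl | h := eq_or_ne m n <;> simp [rescale, *]

lemma expEval_rescale (a x : F) (c : ℕ →₀ V) : expEval x (rescale a c) = expEval (a * x) c := by
  suffices h : expEval x ∘ₗ rescale a = expEval (V := V) (a * x) from LinearMap.congr_fun h c
  refine Finsupp.lhom_ext fun n v => ?_
  have hpow : divPow x n * a ^ n = divPow (a * x) n := by
    rw [divPow, divPow, mul_pow, mul_comm (a ^ n), div_mul_eq_mul_div]
  simp [rescale, smul_smul, hpow]

@[simp]
lemma swap_single (p : ℕ × ℕ) (v : V) :
    swap F (Finsupp.single p v) = Finsupp.single p.swap v := by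
  simp [swap]

lemma expEval₂_swap (x y : F) (c : ℕ × ℕ →₀ V) :
    expEval₂ x y (swap F c) = expEval₂ y x c := by
  suffices h : expEval₂ x y ∘ₗ swap F = expEval₂ (V := V) y x from LinearMap.congr_fun h c
  exact Finsupp.lhom_ext fun p v => by simp [mul_comm]

lemma shear_apply (c : ℕ × ℕ →₀ V) (m n : ℕ) :
    shear F c (m, n) = ∑ j ∈ range (m + 1), (m.choose j : F) • c (j, m + n - j) := by
  induction c using Finsupp.induction_linear with
  | zero => simp
  | add c d hc hd => simp only [map_add, Finsupp.add_apply, hc, hd, smul_add, sum_add_distrib]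
  | single p v =>
    obtain ⟨j, r⟩ := p
    simp only [shear, Finsupp.lsum_single, LinearMap.sum_apply, LinearMap.smul_apply,
      Finsupp.lsingle_apply, Finsupp.finsetSum_apply, Finsupp.smul_apply]
    by_cases h : j ≤ m ∧ r = m - j + n
    · obtain ⟨hj, rfl⟩ := h
      rw [sum_eq_single_of_mem (m - j, n) (by simp), sum_eq_single_of_mem j (by grind)]
      · rw [Nat.add_sub_cancel' hj, Nat.sub_add_comm hj, Finsupp.single_eq_same,
          Finsupp.single_eq_same]
      all_goals
        intro q _ hq
        rw [Finsupp.single_eq_of_ne (by grind), smul_zero]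
    · rw [sum_eq_zero fun q hq => ?_, sum_eq_zero fun i hi => ?_]
      · rw [Finsupp.single_eq_of_ne (by grind), smul_zero]
      · have hqr := mem_antidiagonal.1 hq
        rw [Finsupp.single_eq_of_ne (by grind), smul_zero]

lemma expEval₂_shear [CharZero F] (x y : F) (c : ℕ × ℕ →₀ V) :
    expEval₂ x y (shear F c) = expEval₂ x (x + y) c := by
  suffices h : expEval₂ x y ∘ₗ shear F = expEval₂ (V := V) x (x + y) from LinearMap.congr_fun h c
  refine Finsupp.lhom_ext fun p v => ?_
  simp only [shear, LinearMap.comp_apply, Finsupp.lsum_single, LinearMap.sum_apply,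
    LinearMap.smul_apply, Finsupp.lsingle_apply, map_sum, map_smul, expEval₂_single, smul_smul,
    ← sum_smul]
  rw [divPow_add, mul_sum]
  simp only [← mul_assoc, ← divPow_mul_divPow]

lemma hankel_apply (c : ℕ →₀ V) (m n : ℕ) : hankel F c (m, n) = c (m + n) := by
  rw [hankel, LinearMap.comp_apply, shear_apply, sum_eq_single_of_mem 0 (by simp) fun j _ hj => ?_]
  · simp [Finsupp.mapDomain_apply (Prod.mk_right_injective 0)]
  · rw [Finsupp.lmapDomain_apply, Finsupp.mapDomain_of_notMem_range _ _ (by grind), smul_zero]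

lemma expEval₂_hankel [CharZero F] (x y : F) (c : ℕ →₀ V) :
    expEval₂ x y (hankel F c) = expEval (x + y) c := by
  suffices h : expEval₂ x y ∘ₗ hankel F = expEval (V := V) (x + y) from LinearMap.congr_fun h c
  exact Finsupp.lhom_ext fun n v => by simp [hankel, expEval₂_shear]

lemma translate_apply (y : F) {n N : ℕ} {c : ℕ →₀ V} (hc : ∀ j ≥ N, c (n + j) = 0) :
    translate y c n = ∑ j ∈ range N, divPow y j • c (n + j) := by
  let d := Finsupp.mapRange.linearMap (Finsupp.lapply (R := F) n) (hankel F c).curry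
  have hd (j : ℕ) : d j = c (n + j) := by
    rw [add_comm]
    exact hankel_apply c j n
  calc
    _ = expEval y d := map_expEval (Finsupp.lapply n) y (hankel F c).curry
    _ = _ := by simp only [expEval_eq_sum_range y (N := N) (c := d) (by simpa only [hd]), hd]

lemma expEval_translate [CharZero F] (x y : F) (c : ℕ →₀ V) :
    expEval x (translate y c) = expEval (x + y) c := by
  rw [add_comm, ← expEval₂_hankel]
  rfl

end Substitution

section KernelProduct

variable {F V W U : Type*} [Field F] [AddCommGroup V] [Module F V] [AddCommGroup W] [Module F W]
  [AddCommGroup U] [Module F U]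

/-- For `f`, `g` with two-variable generating functions `f̂`, `ĝ`, the sequence in `U[t₁, t₂]` whose
exponential generating function at `x` has the generating function
`(a, b) ↦ β (f̂ (a, -a - x)) (ĝ (a + x, b))`. When `β` is a multiplication, its `n`-th entry is
the contribution of the products `uv` to `f⁽ⁿ⁾g`. -/
noncomputable def kernelProd (β : V →ₗ[F] W →ₗ[F] U) :
    (ℕ × ℕ →₀ V) →ₗ[F] (ℕ × ℕ →₀ W) →ₗ[F] (ℕ →₀ ℕ × ℕ →₀ U) :=
  Finsupp.lsum F fun p => LinearMap.flip <| Finsupp.lsum F fun q => LinearMap.flip <| β.compr₂ <|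
    ∑ r ∈ antidiagonal (q.1 + p.2),
      ((-1) ^ p.2 * ((q.1 + p.2).choose p.2 : F) * ((p.1 + r.2).choose p.1 : F)) •
        (Finsupp.lsingle r.1 ∘ₗ Finsupp.lsingle (p.1 + r.2, q.2))

lemma kernelProd_single_single (β : V →ₗ[F] W →ₗ[F] U) (p q : ℕ × ℕ) (u : V) (v : W) :
    kernelProd β (Finsupp.single p u) (Finsupp.single q v) =
      ∑ r ∈ antidiagonal (q.1 + p.2),
        ((-1) ^ p.2 * ((q.1 + p.2).choose p.2 : F) * ((p.1 + r.2).choose p.1 : F)) •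
          Finsupp.single r.1 (Finsupp.single (p.1 + r.2, q.2) (β u v)) := by
  simp [kernelProd]

lemma kernelProd_single_single_apply (β : V →ₗ[F] W →ₗ[F] U) (p q : ℕ × ℕ) (u : V) (v : W)
    (s : ℕ) :
    kernelProd β (Finsupp.single p u) (Finsupp.single q v) s =
      if s ≤ p.1 + p.2 + q.1 then
        ((-1) ^ p.2 * ((q.1 + p.2).choose p.2 : F) * ((p.1 + p.2 + q.1 - s).choose p.1 : F)) •
          Finsupp.single (p.1 + p.2 + q.1 - s, q.2) (β u v)
      else 0 := by
  rw [kernelProd_single_single, Finsupp.finsetSum_apply]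
  by_cases hs : s ≤ q.1 + p.2
  · have h : p.1 + (q.1 + p.2 - s) = p.1 + p.2 + q.1 - s := by lia
    rw [sum_eq_single_of_mem (s, q.1 + p.2 - s) (by simp [hs]) fun r hr hrs => ?_,
      if_pos (by lia), Finsupp.smul_apply, Finsupp.single_eq_same, h]
    have hr' := mem_antidiagonal.1 hr
    rw [Finsupp.smul_apply, Finsupp.single_eq_of_ne (by grind), smul_zero]
  · rw [sum_eq_zero fun r hr => ?_]
    · split_ifs with h
      · rw [Nat.choose_eq_zero_of_lt (by lia : p.1 + p.2 + q.1 - s < p.1)]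
        simp
      · rfl
    · have hr' := mem_antidiagonal.1 hr
      rw [Finsupp.smul_apply, Finsupp.single_eq_of_ne (by grind), smul_zero]

lemma expEval₂_expEval_kernelProd [CharZero F] (β : V →ₗ[F] W →ₗ[F] U) (x a b : F)
    (f : ℕ × ℕ →₀ V) (g : ℕ × ℕ →₀ W) :
    expEval₂ a b (expEval x (kernelProd β f g)) =
      β (expEval₂ a (-a - x) f) (expEval₂ (a + x) b g) := by
  suffices h : (kernelProd β).compr₂ (expEval₂ a b ∘ₗ expEval x) =
      β.compl₁₂ (expEval₂ a (-a - x)) (expEval₂ (a + x) b) from LinearMap.congr_fun₂ h f g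
  refine Finsupp.lhom_ext fun p u => Finsupp.lhom_ext fun q v => ?_
  simp only [LinearMap.compr₂_apply, LinearMap.compl₁₂_apply, LinearMap.comp_apply,
    kernelProd_single_single, map_sum, map_smul, expEval_single, expEval₂_single, smul_smul,
    LinearMap.smul_apply, ← sum_smul]
  rw [mul_comm (divPow (a + x) q.1 * _), ← mul_assoc,
    divPow_mul_divPow_neg_sub_mul_divPow_add, sum_mul]
  simp only [mul_assoc]

end KernelProduct

section Del

variable {F V : Type*} [Field F] [AddCommGroup V] [Module F V]

variable (F) in
/-- The operator `∂` on `V[t₁, t₂]`; here `Finsupp.single (m, n) u` encodes `u t₁ ^ m t₂ ^ n`. -/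
noncomputable def del : (ℕ × ℕ →₀ V) →ₗ[F] (ℕ × ℕ →₀ V) :=
  Finsupp.lsum F fun p =>
    ((p.1 + 1 : ℕ) : F) • Finsupp.lsingle (p.1 + 1, p.2) +
      ((p.2 + 1 : ℕ) : F) • Finsupp.lsingle (p.1, p.2 + 1)

lemma expEval₂_del [CharZero F] (a b : F) (f : ℕ × ℕ →₀ V) :
    expEval₂ a b (del F f) = (a + b) • expEval₂ a b f := by
  suffices h : expEval₂ a b ∘ₗ del F = (a + b) • expEval₂ (V := V) a b from
    LinearMap.congr_fun h f
  refine Finsupp.lhom_ext fun p v => ?_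
  have ha := succ_mul_divPow_succ a p.1
  have hb := succ_mul_divPow_succ b p.2
  simp only [del, LinearMap.comp_apply, Finsupp.lsum_single, LinearMap.add_apply,
    LinearMap.smul_apply, Finsupp.lsingle_apply, map_add, map_smul, expEval₂_single, smul_smul,
    ← add_smul]
  congr 1
  linear_combination divPow b p.2 * ha + divPow a p.1 * hb

lemma expEval₂_del_iterate [CharZero F] (a b : F) (j : ℕ) (f : ℕ × ℕ →₀ V) :
    expEval₂ a b ((del F)^[j] f) = (a + b) ^ j • expEval₂ a b f := by
  induction j with
  | zero => simp
  | succ j ih => rw [Function.iterate_succ_apply', expEval₂_del, ih, smul_smul, pow_succ']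

end Del

section Products

-- The default depth does not find subtraction of bilinear maps into `ℕ →₀ ℕ × ℕ →₀ A`.
set_option maxSynthPendingDepth 3

variable (F A : Type*) [Field F] [NonUnitalRing A] [Module F A] [IsScalarTower F A A]
  [SMulCommClass F A A]

/-- The sequence of the `n`-th products on `A[t₁, t₂]`; the two terms of `Y⁺` are exchanged by
swapping `t₁` with `t₂` and passing to the opposite multiplication. -/
noncomputable def products :
    (ℕ × ℕ →₀ A) →ₗ[F] (ℕ × ℕ →₀ A) →ₗ[F] (ℕ →₀ ℕ × ℕ →₀ A) :=
  kernelProd (LinearMap.mul F A) -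
    ((kernelProd (LinearMap.mul F A).flip).compl₁₂ (swap F) (swap F)).compr₂
      (Finsupp.mapRange.linearMap (swap F))

/-- The `n`-th product `f⁽ⁿ⁾g` on `A[t₁, t₂]`. -/
noncomputable def nthProduct (n : ℕ) : (ℕ × ℕ →₀ A) →ₗ[F] (ℕ × ℕ →₀ A) →ₗ[F] (ℕ × ℕ →₀ A) :=
  (products F A).compr₂ (Finsupp.lapply n)

variable {F A}

lemma nthProduct_apply (n : ℕ) (f g : ℕ × ℕ →₀ A) :
    nthProduct F A n f g = products F A f g n := rfl

lemma nthProduct_single_single (s : ℕ) (p q : ℕ × ℕ) (u v : A) :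
    nthProduct F A s (Finsupp.single p u) (Finsupp.single q v) =
      (if s ≤ p.1 + p.2 + q.1 then
        ((-1 : F) ^ p.2 * ((q.1 + p.2).choose p.2 : F) *
          ((p.1 + p.2 + q.1 - s).choose p.1 : F)) •
          Finsupp.single (p.1 + p.2 + q.1 - s, q.2) (u * v)
      else 0) -
      (if s ≤ p.1 + p.2 + q.2 then
        ((-1 : F) ^ p.1 * ((q.2 + p.1).choose p.1 : F) *
          ((p.1 + p.2 + q.2 - s).choose p.2 : F)) •
          Finsupp.single (q.1, p.1 + p.2 + q.2 - s) (v * u)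
      else 0) := by
  simp only [nthProduct, products, LinearMap.sub_apply, LinearMap.compr₂_apply,
    LinearMap.compl₁₂_apply, Finsupp.lapply_apply, Finsupp.sub_apply,
    Finsupp.mapRange.linearMap_apply, Finsupp.mapRange_apply, swap_single,
    kernelProd_single_single_apply, apply_ite (swap F), map_smul, map_zero,
    LinearMap.mul_apply', LinearMap.flip_apply, Prod.fst_swap, Prod.snd_swap, Prod.swap_prod_mk,
    add_comm p.2 p.1]

lemma nthProduct_eq_sum (s : ℕ) (f g : ℕ × ℕ →₀ A) :
    nthProduct F A s f g = f.sum fun p u => g.sum fun q v =>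
      nthProduct F A s (Finsupp.single p u) (Finsupp.single q v) := by
  conv_lhs => rw [← f.sum_single, ← g.sum_single]
  simp only [Finsupp.sum, map_sum, LinearMap.sum_apply]
  exact sum_comm

/-- The `λ`-bracket `∑ n, (λ ^ n / n!) • f⁽ⁿ⁾g` at `λ = x`. -/
noncomputable def lambdaBracket (x : F) :
    (ℕ × ℕ →₀ A) →ₗ[F] (ℕ × ℕ →₀ A) →ₗ[F] (ℕ × ℕ →₀ A) :=
  (products F A).compr₂ (expEval x)

lemma expEval_products (x : F) (f g : ℕ × ℕ →₀ A) :
    expEval x (products F A f g) = lambdaBracket x f g := rfl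

variable [CharZero F]

lemma expEval₂_lambdaBracket (x a b : F) (f g : ℕ × ℕ →₀ A) :
    expEval₂ a b (lambdaBracket x f g) =
      expEval₂ a (-a - x) f * expEval₂ (a + x) b g -
        expEval₂ a (b + x) g * expEval₂ (-b - x) b f := by
  rw [← expEval_products]
  simp only [products, LinearMap.sub_apply, LinearMap.compr₂_apply, LinearMap.compl₁₂_apply,
    map_sub, ← map_expEval, expEval₂_swap, expEval₂_expEval_kernelProd, LinearMap.mul_apply',
    LinearMap.flip_apply]

lemma lambdaBracket_del_left (x : F) (f g : ℕ × ℕ →₀ A) :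
    lambdaBracket x (del F f) g = -x • lambdaBracket x f g := by
  refine eq_of_expEval₂_eq (F := F) fun a b => ?_
  rw [map_smul, expEval₂_lambdaBracket, expEval₂_lambdaBracket, expEval₂_del, expEval₂_del,
    show a + (-a - x) = -x by ring, show -b - x + b = -x by ring, smul_mul_assoc, mul_smul_comm,
    smul_sub]

lemma expEval₂_lambdaBracket_skew_symm (x a b : F) (f g : ℕ × ℕ →₀ A) :
    expEval₂ a b (lambdaBracket x f g) =
      -expEval₂ a b (lambdaBracket (-(x + (a + b))) g f) := by
  rw [expEval₂_lambdaBracket, expEval₂_lambdaBracket, neg_sub]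
  congr 3 <;> ring_nf

lemma lambdaBracket_jacobi (x y : F) (f g h : ℕ × ℕ →₀ A) :
    lambdaBracket x f (lambdaBracket y g h) - lambdaBracket y g (lambdaBracket x f h) =
      lambdaBracket (x + y) (lambdaBracket x f g) h := by
  refine eq_of_expEval₂_eq (F := F) fun a b => ?_
  simp only [map_sub, expEval₂_lambdaBracket, mul_sub, sub_mul, mul_assoc]
  -- `abel_nf` also normalises the points at which `f`, `g` and `h` are evaluated.
  abel_nf

lemma products_del_left (f g : ℕ × ℕ →₀ A) :
    products F A (del F f) g = -mulVar F (products F A f g) :=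
  eq_of_expEval_eq (F := F) fun x => by
    rw [map_neg, expEval_mulVar, expEval_products, expEval_products, lambdaBracket_del_left,
      neg_smul]

lemma products_skew_symm {n N : ℕ} {f g : ℕ × ℕ →₀ A} (hN : ∀ j ≥ N, products F A g f (n + j) = 0) :
    products F A f g n = ∑ j ∈ range N,
      ((-1) ^ (n + j + 1) * (j ! : F)⁻¹) • (del F)^[j] (products F A g f (n + j)) := by
  refine eq_of_expEval₂_eq (F := F) fun a b => ?_
  let e : (ℕ →₀ ℕ × ℕ →₀ A) →ₗ[F] (ℕ →₀ A) := Finsupp.mapRange.linearMap (expEval₂ a b)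
  have hswap : e (products F A f g) =
      -rescale (-1 : F) (translate (-(a + b)) (e (products F A g f))) :=
    eq_of_expEval_eq (F := F) fun x => by
      rw [map_neg, expEval_rescale, expEval_translate, ← map_expEval, ← map_expEval,
        expEval_products, expEval_products, expEval₂_lambdaBracket_skew_symm, neg_one_mul,
        ← neg_add]
  have he (j : ℕ) : e (products F A g f) j = expEval₂ a b (products F A g f j) := rfl
  calc
    _ = e (products F A f g) n := rfl
    _ = -((-1 : F) ^ n • ∑ j ∈ range N,
        divPow (-(a + b)) j • expEval₂ a b (products F A g f (n + j))) := by
      rw [hswap, Finsupp.neg_apply, rescale_apply,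
        translate_apply _ fun j hj => by rw [he, hN j hj, map_zero]]
      simp only [he]
    _ = _ := by
      rw [smul_sum, ← sum_neg_distrib, map_sum]
      refine sum_congr rfl fun j _ => ?_
      rw [map_smul, expEval₂_del_iterate, smul_smul, smul_smul, ← neg_smul, divPow_neg, divPow]
      ring_nf

lemma products_jacobi (m n : ℕ) (f g h : ℕ × ℕ →₀ A) :
    products F A f (products F A g h n) m - products F A g (products F A f h m) n =
      ∑ j ∈ range (m + 1), (m.choose j : F) •
        products F A (products F A f g j) h (m + n - j) := by
  have hshear :
      swap F (Finsupp.mapRange.linearMap (products F A f) (products F A g h)).uncurry -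
          (Finsupp.mapRange.linearMap (products F A g) (products F A f h)).uncurry =
        shear F
          (Finsupp.mapRange.linearMap ((products F A).flip h) (products F A f g)).uncurry := by
    refine eq_of_expEval₂_eq (F := F) fun x y => ?_
    simp only [map_sub, expEval₂_swap, expEval₂_shear, expEval₂_uncurry, ← map_expEval,
      LinearMap.flip_apply, expEval_products, lambdaBracket_jacobi]
  exact (DFunLike.congr_fun hshear (m, n)).trans (shear_apply ..)

end Products

/-- A conformal algebra structure on an `F`-vector space: a linear operator `D`, written `∂` in the
axioms, and bilinear products `prod n u v = u⁽ⁿ⁾v`. The infinite sum in the skew-symmetry axiom is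
replaced by its truncations at all `N` beyond which the products vanish. -/
structure IsConformalAlgebra {F R : Type*} [Field F] [AddCommGroup R] [Module F R]
    (D : R →ₗ[F] R) (prod : ℕ → R →ₗ[F] R →ₗ[F] R) : Prop where
  locality (u v : R) : ∃ N : ℕ, ∀ n ≥ N, prod n u v = 0
  zero_deriv_left (u v : R) : prod 0 (D u) v = 0
  succ_deriv_left (n : ℕ) (u v : R) :
    prod (n + 1) (D u) v = -((n + 1 : ℕ) : F) • prod n u v
  skew_symm (n N : ℕ) (u v : R) (hN : ∀ j ≥ N, prod (n + j) v u = 0) :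
    prod n u v = ∑ j ∈ range N, ((-1 : F) ^ (n + j + 1) * (j ! : F)⁻¹) • D^[j] (prod (n + j) v u)
  jacobi (m n : ℕ) (u v w : R) :
    prod m u (prod n v w) - prod n v (prod m u w) =
      ∑ j ∈ range (m + 1), (m.choose j : F) • prod (m + n - j) (prod j u v) w

end ConformalAlgebra

lemma mD_eq_del (F : Type*) [Field F] (k : ℕ) :
    mD F k = ConformalAlgebra.del F (V := Matrix (Fin k) (Fin k) F) := rfl

lemma mProd_eq_nthProduct (F : Type*) [Field F] (k s : ℕ) (f g : MatCarrier F k) :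
    mProd F k s f g =
      ConformalAlgebra.nthProduct F (Matrix (Fin k) (Fin k) F) s f g := by
  rw [ConformalAlgebra.nthProduct_eq_sum]
  simp only [ConformalAlgebra.nthProduct_single_single]
  rfl

open ConformalAlgebra in
theorem mkk_is_conformal_algebra_general (F A : Type*) [Field F] [CharZero F] [NonUnitalRing A]
    [Module F A] [IsScalarTower F A A] [SMulCommClass F A A] :
    IsConformalAlgebra (del F) (nthProduct F A) where
  locality f g := by
    obtain ⟨N, hN⟩ := (products F A f g).support.exists_nat_subset_range
    exact ⟨N, fun n hn => Finsupp.notMem_support_iff.1 fun h =>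
      hn.not_gt (Finset.mem_range.1 (hN h))⟩
  zero_deriv_left f g := by
    rw [nthProduct_apply, products_del_left, Finsupp.neg_apply, mulVar_apply_zero, neg_zero]
  succ_deriv_left n f g := by
    rw [nthProduct_apply, products_del_left, Finsupp.neg_apply, mulVar_apply_succ, neg_smul,
      nthProduct_apply]
  skew_symm n N f g := products_skew_symm
  jacobi := products_jacobi

/-- `(R_{k×k}, ∂, products)` is a conformal algebra: locality, sesquilinearity,
skew-symmetry and the Jacobi identity hold. -/
theorem mkk_is_conformal_algebra (F : Type*) [Field F] [CharZero F]
    (k : ℕ) (hk : 1 ≤ k) :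
    -- locality
    (∀ f g : MatCarrier F k, ∃ N : ℕ, ∀ n ≥ N, mProd F k n f g = 0) ∧
    -- sesquilinearity
    (∀ f g : MatCarrier F k, mProd F k 0 (mD F k f) g = 0) ∧
    (∀ (n : ℕ) (f g : MatCarrier F k),
      mProd F k (n + 1) (mD F k f) g = -(((n + 1 : ℕ) : F)) • mProd F k n f g) ∧
    -- skew-symmetry
    (∀ (n N : ℕ) (f g : MatCarrier F k), (∀ j ≥ N, mProd F k (n + j) g f = 0) →
      mProd F k n f g = ∑ j ∈ Finset.range N,
        ((-1 : F) ^ (n + j + 1) * ((j.factorial : F)⁻¹)) •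
          ((mD F k)^[j] (mProd F k (n + j) g f))) ∧
    -- Jacobi identity
    (∀ (m n : ℕ) (f g h : MatCarrier F k),
      mProd F k m f (mProd F k n g h) - mProd F k n g (mProd F k m f h) =
        ∑ j ∈ Finset.range (m + 1),
          ((m.choose j : F)) • mProd F k (m + n - j) (mProd F k j f g) h) := by
  simp only [mD_eq_del, mProd_eq_nthProduct]
  obtain ⟨h₁, h₂, h₃, h₄, h₅⟩ := mkk_is_conformal_algebra_general F (Matrix (Fin k) (Fin k) F)
  exact ⟨h₁, h₂, h₃, h₄, h₅⟩
end

section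
/- The conformal algebra R_{k×k} is simple: its products are not all zero, and every nonzero subspace I ⊆ R_{k×k} with ∂(I) ⊆ I and u⁽ⁿ⁾w ∈ I for all u ∈ R_{k×k}, w ∈ I, n ∈ ℕ equals R_{k×k}. -/
/-!
When `s` exceeds the `t₂`-degree of `g`, only the summand of `u(0,M)⁽ˢ⁾g` coming from left
multiplication survives. For `s = M + a`, with `a` the `t₁`-degree of `g`, what survives of
`1(0,M)⁽ˢ⁾g` is the coefficient of `t₁^a` in `g` times `± binom(a + M, M)`, and this scalar is
nonzero in `F` for suitable arbitrarily large `M`. The involution `u(m,n) ↦ uᵀ(n,m)` gives the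
same for `t₂`, so a nonzero subspace stable under left multiplications contains some `v(0,0)`
with `v ≠ 0`. The matrices occurring this way form a two-sided ideal, so simplicity of the matrix
ring puts `1(0,0)` in the subspace, and the same operators with larger `M` raise `1(0,0)` to
every `u(m,n)`.
-/

theorem exists_le_natCast_choose_ne_zero (R : Type*) [AddMonoidWithOne R] [NeZero (1 : R)]
    (a c : ℕ) : ∃ M, c ≤ M ∧ ((a + M).choose M : R) ≠ 0 := by
  induction a generalizing c with
  | zero => exact ⟨c, le_rfl, by simp⟩
  | succ a ih =>
    by_contra! hzero
    obtain ⟨M, hM, hne⟩ := ih (c + 1)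
    obtain ⟨M, rfl⟩ := Nat.exists_eq_add_of_le' (Nat.one_le_of_lt hM)
    have pascal : ((a + 1 + (M + 1)).choose (M + 1) : R) =
        (a + 1 + M).choose M + (a + (M + 1)).choose (M + 1) := by
      rw [← add_assoc, Nat.choose_succ_succ', Nat.cast_add, Nat.add_right_comm a 1 M, add_assoc]
    rw [hzero (M + 1) (by omega), hzero M (by omega), zero_add] at pascal
    exact hne pascal.symm

namespace MatCarrier

variable {F : Type*} [Field F] {k : ℕ}

/-- The involution `u(m,n) ↦ uᵀ(n,m)`, which exchanges the two summands of `mProd` up to a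
common sign. -/
noncomputable def dual : MatCarrier F k →ₗ[F] MatCarrier F k :=
  (Finsupp.domLCongr (Equiv.prodComm ℕ ℕ)).toLinearMap ∘ₗ
    Finsupp.mapRange.linearMap (Matrix.transposeLinearEquiv (Fin k) (Fin k) F F).toLinearMap

@[simp]
theorem dual_apply (g : MatCarrier F k) (q : ℕ × ℕ) : dual g q = (g q.swap).transpose := by
  simp [dual]

@[simp]
theorem dual_single (q : ℕ × ℕ) (v : Matrix (Fin k) (Fin k) F) :
    dual (Finsupp.single q v) = Finsupp.single q.swap v.transpose := by
  simp [dual]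

theorem sum_dual {M : Type*} [AddCommMonoid M] (g : MatCarrier F k)
    {φ : ℕ × ℕ → Matrix (Fin k) (Fin k) F → M} (hφ : ∀ q, φ q 0 = 0) :
    (dual g).sum φ = g.sum fun q v => φ q.swap v.transpose := by
  have dual_eq : dual g =
      (g.mapRange Matrix.transpose Matrix.transpose_zero).mapDomain Prod.swap := by
    ext q : 1
    rw [dual_apply, ← q.swap_swap, Finsupp.mapDomain_apply Prod.swap_injective,
      Finsupp.mapRange_apply, q.swap_swap]
  rw [dual_eq, Finsupp.sum_mapDomain_index_inj Prod.swap_injective, Finsupp.sum_mapRange_index]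
  exact fun q => hφ q.swap

@[simp]
theorem dual_dual (g : MatCarrier F k) : dual (dual g) = g := by
  ext q : 1
  simp

theorem mProd_dual (s : ℕ) (f g : MatCarrier F k) :
    mProd F k s (dual f) (dual g) = -dual (mProd F k s f g) := by
  rw [mProd, mProd, sum_dual f (by simp), map_finsuppSum, ← Finsupp.sum_neg]
  refine Finsupp.sum_congr fun p _ => ?_
  rw [sum_dual g (by simp), map_finsuppSum, ← Finsupp.sum_neg]
  refine Finsupp.sum_congr fun q _ => ?_
  simp only [map_sub, neg_sub, apply_ite dual, map_smul, map_zero, dual_single, Prod.fst_swap,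
    Prod.snd_swap, Prod.swap_prod_mk, Matrix.transpose_mul, add_comm p.2 p.1]

theorem mProd_single_of_snd_lt (s M : ℕ) (u : Matrix (Fin k) (Fin k) F) {g : MatCarrier F k}
    (hg : ∀ q ∈ g.support, q.2 < s) :
    mProd F k s (Finsupp.single (0, M) u) g = g.sum fun q v =>
      if s ≤ M + q.1 then ((-1) ^ M * ((q.1 + M).choose M : F)) •
        Finsupp.single (M + q.1 - s, q.2) (u * v) else 0 := by
  rw [mProd, Finsupp.sum_single_index (by simp)]
  refine Finsupp.sum_congr fun q hq => ?_
  have choose_eq_zero (_ : s ≤ M + q.2) : (M + q.2 - s).choose M = 0 :=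
    Nat.choose_eq_zero_of_lt (by have := hg q hq; omega)
  by_cases hs : s ≤ M + q.2 <;> simp [hs, choose_eq_zero]

theorem mProd_single_single {s M n : ℕ} (hn : n < s) (hs : s ≤ M)
    (u v : Matrix (Fin k) (Fin k) F) :
    mProd F k s (Finsupp.single (0, M) u) (Finsupp.single (0, n) v) =
      (-1 : F) ^ M • Finsupp.single (M - s, n) (u * v) := by
  rw [mProd_single_of_snd_lt, Finsupp.sum_single_index (by simp)]
  · simp [hs]
  · intro q hq
    obtain rfl := Finset.mem_singleton.1 (Finsupp.support_single_subset hq)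
    exact hn

/-- The coefficient of `t₁^a`, a polynomial in `t₂` alone, viewed again in the carrier. -/
noncomputable def fstCoeff (a : ℕ) : MatCarrier F k →ₗ[F] MatCarrier F k :=
  Finsupp.lsum F fun q => if q.1 = a then Finsupp.lsingle (0, q.2) else 0

theorem fstCoeff_single (a : ℕ) (q : ℕ × ℕ) (v : Matrix (Fin k) (Fin k) F) :
    fstCoeff a (Finsupp.single q v) = if q.1 = a then Finsupp.single (0, q.2) v else 0 := by
  rw [fstCoeff, Finsupp.lsum_single]
  split_ifs <;> simp

theorem fstCoeff_apply (a : ℕ) (g : MatCarrier F k) (q : ℕ × ℕ) :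
    fstCoeff a g q = if q.1 = 0 then g (a, q.2) else 0 := by
  classical
  induction g using Finsupp.induction_linear with
  | zero => simp
  | add f g hf hg => simp only [map_add, Finsupp.add_apply, hf, hg]; split_ifs <;> simp
  | single p v =>
    obtain ⟨m, n⟩ := p
    obtain ⟨m', n'⟩ := q
    rw [fstCoeff_single]
    split_ifs <;> simp_all [Finsupp.single_apply, eq_comm]

theorem fstCoeff_dual_fstCoeff (a b : ℕ) (g : MatCarrier F k) :
    fstCoeff b (dual (fstCoeff a g)) = Finsupp.single (0, 0) (g (a, b)).transpose := by
  classical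
  ext ⟨m, n⟩ : 1
  rw [fstCoeff_apply, dual_apply, fstCoeff_apply, Finsupp.single_apply]
  by_cases hm : m = 0 <;> by_cases hn : n = 0 <;> simp [hm, hn, eq_comm]

theorem mProd_single_one_eq_smul_fstCoeff {a M : ℕ} {g : MatCarrier F k}
    (ha : ∀ q ∈ g.support, q.1 ≤ a) (hM : ∀ q ∈ g.support, q.2 < M) :
    mProd F k (M + a) (Finsupp.single (0, M) 1) g =
      ((-1) ^ M * ((a + M).choose M : F)) • fstCoeff a g := by
  rw [mProd_single_of_snd_lt _ _ _ fun q hq => (hM q hq).trans_le (Nat.le_add_right M a)]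
  conv_rhs => rw [← g.sum_single, map_finsuppSum, Finsupp.smul_sum]
  refine Finsupp.sum_congr fun q hq => ?_
  rw [fstCoeff_single]
  rcases (ha q hq).eq_or_lt with rfl | hlt
  · simp
  · rw [if_neg (by omega), if_neg hlt.ne, smul_zero]

/-- A subspace closed under all left multiplications `u⁽ⁿ⁾·`; ideals of the conformal algebra are
the `∂`-invariant ones. -/
def IsMProdStable (I : Submodule F (MatCarrier F k)) : Prop :=
  ∀ u : MatCarrier F k, ∀ w ∈ I, ∀ n : ℕ, mProd F k n u w ∈ I

namespace IsMProdStable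

variable {I : Submodule F (MatCarrier F k)}

theorem comap_dual (hI : IsMProdStable I) : IsMProdStable (I.comap dual) := by
  intro u w hw n
  rw [Submodule.mem_comap, ← neg_mem_iff, ← mProd_dual]
  exact hI _ _ hw n

theorem single_mul_left_mem (hI : IsMProdStable I) {n : ℕ} {x : Matrix (Fin k) (Fin k) F}
    (hx : Finsupp.single (0, n) x ∈ I) (m : ℕ) (u : Matrix (Fin k) (Fin k) F) :
    Finsupp.single (m, n) (u * x) ∈ I := by
  have h := hI (Finsupp.single (0, n + 1 + m) u) _ hx (n + 1)
  rw [mProd_single_single n.lt_succ_self (Nat.le_add_right _ m), Nat.add_sub_cancel_left] at h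
  exact (I.smul_mem_iff (pow_ne_zero _ (by simp))).1 h

theorem single_mul_right_mem (hI : IsMProdStable I) {m : ℕ} {x : Matrix (Fin k) (Fin k) F}
    (hx : Finsupp.single (m, 0) x ∈ I) (n : ℕ) (u : Matrix (Fin k) (Fin k) F) :
    Finsupp.single (m, n) (x * u) ∈ I := by
  have hx' : Finsupp.single (0, m) x.transpose ∈ I.comap dual := by simpa using hx
  simpa [-Finsupp.single_mul] using hI.comap_dual.single_mul_left_mem hx' n u.transpose

theorem fstCoeff_mem (hI : IsMProdStable I) {g : MatCarrier F k} (hg : g ∈ I) {a : ℕ}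
    (ha : ∀ q ∈ g.support, q.1 ≤ a) : fstCoeff a g ∈ I := by
  obtain ⟨M, hM, hchoose⟩ := exists_le_natCast_choose_ne_zero F a (g.support.sup Prod.snd + 1)
  have h := hI (Finsupp.single (0, M) 1) g hg (M + a)
  rw [mProd_single_one_eq_smul_fstCoeff ha fun q hq =>
    (Nat.lt_succ_of_le (Finset.le_sup (f := Prod.snd) hq)).trans_le hM] at h
  exact (I.smul_mem_iff (mul_ne_zero (pow_ne_zero _ (by simp)) hchoose)).1 h

theorem exists_single_zero_mem (hI : IsMProdStable I) (hne : I ≠ ⊥) :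
    ∃ v : Matrix (Fin k) (Fin k) F, v ≠ 0 ∧ Finsupp.single (0, 0) v ∈ I := by
  obtain ⟨g, hg, hg0⟩ := I.exists_mem_ne_zero_of_ne_bot hne
  obtain ⟨⟨a, b⟩, hab, hmax⟩ :=
    g.support.exists_max_image toLex (Finsupp.support_nonempty_iff.2 hg0)
  simp only [Prod.Lex.toLex_le_toLex] at hmax
  have hlead : dual (fstCoeff a g) ∈ I.comap dual := by
    rw [Submodule.mem_comap, dual_dual]
    refine hI.fstCoeff_mem hg fun q hq => ?_
    exact (hmax q hq).elim le_of_lt fun h => h.1.le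
  have hb : ∀ q ∈ (dual (fstCoeff a g)).support, q.1 ≤ b := by
    intro q hq
    rw [Finsupp.mem_support_iff, dual_apply, fstCoeff_apply] at hq
    have := hmax (a, q.1) (Finsupp.mem_support_iff.2 fun h0 => hq (by simp [h0]))
    omega
  refine ⟨g (a, b), Finsupp.mem_support_iff.1 hab, ?_⟩
  have h := hI.comap_dual.fstCoeff_mem hlead hb
  rw [fstCoeff_dual_fstCoeff] at h
  simpa using h

/-- The matrices `x` with `x(0,0) ∈ I`; they form a two-sided ideal, to which simplicity of the
matrix ring applies. -/
def constIdeal (hI : IsMProdStable I) : TwoSidedIdeal (Matrix (Fin k) (Fin k) F) :=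
  .mk' {x | Finsupp.single (0, 0) x ∈ I} (by simp)
    (fun hx hy => by simpa using I.add_mem hx hy)
    (fun hx => by simpa using hx)
    (fun hx => hI.single_mul_left_mem hx 0 _)
    (fun hx => hI.single_mul_right_mem hx 0 _)

theorem mem_constIdeal (hI : IsMProdStable I) {x : Matrix (Fin k) (Fin k) F} :
    x ∈ hI.constIdeal ↔ Finsupp.single (0, 0) x ∈ I :=
  TwoSidedIdeal.mem_mk' ..

theorem eq_top (hI : IsMProdStable I) (hne : I ≠ ⊥) : I = ⊤ := by
  obtain ⟨v, hv0, hv⟩ := hI.exists_single_zero_mem hne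
  have : Nonempty (Fin k) := by
    by_contra! hk
    exact hv0 (Subsingleton.elim v 0)
  have hone : Finsupp.single (0, 0) 1 ∈ I := hI.mem_constIdeal.1 <|
    IsSimpleRing.one_mem_of_ne_zero_mem hI.constIdeal hv0 (hI.mem_constIdeal.2 hv)
  have hsingle (q : ℕ × ℕ) (x : Matrix (Fin k) (Fin k) F) : Finsupp.single q x ∈ I := by
    simpa using hI.single_mul_right_mem (hI.single_mul_left_mem hone q.1 x) q.2 1
  refine Submodule.eq_top_iff'.2 fun x => ?_
  rw [← x.sum_single]
  exact I.sum_mem fun q _ => hsingle q _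

end IsMProdStable

end MatCarrier

theorem mkk_is_simple_general (F : Type*) [Field F] (k : ℕ) (hk : 1 ≤ k) :
    (∃ (s : ℕ) (f g : MatCarrier F k), mProd F k s f g ≠ 0) ∧
    (∀ I : Submodule F (MatCarrier F k),
      (∀ (u : MatCarrier F k), ∀ w ∈ I, ∀ n : ℕ, mProd F k n u w ∈ I) →
      I ≠ ⊥ → I = ⊤) := by
  refine ⟨⟨1, Finsupp.single (0, 1) 1, Finsupp.single (0, 0) 1, ?_⟩,
    fun I hI hne => MatCarrier.IsMProdStable.eq_top hI hne⟩
  have : Nonempty (Fin k) := ⟨⟨0, hk⟩⟩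
  rw [MatCarrier.mProd_single_single one_pos le_rfl]
  simp

/-- The conformal algebra `R_{k×k}` is simple: its products are not all zero, and
every nonzero subspace `I` closed under `∂` and under all left multiplications
`u⁽ⁿ⁾·` equals all of `R_{k×k}`. -/
theorem mkk_is_simple (F : Type*) [Field F] [CharZero F] (k : ℕ) (hk : 1 ≤ k) :
    (∃ (s : ℕ) (f g : MatCarrier F k), mProd F k s f g ≠ 0) ∧
    (∀ I : Submodule F (MatCarrier F k),
      (∀ x ∈ I, mD F k x ∈ I) →
      (∀ (u : MatCarrier F k), ∀ w ∈ I, ∀ n : ℕ, mProd F k n u w ∈ I) →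
      I ≠ ⊥ → I = ⊤) :=
  let ⟨hprod, hsimple⟩ := mkk_is_simple_general F k hk
  ⟨hprod, fun I _ hI hne => hsimple I hI hne⟩
end

section
/- For every ℓ ≥ 1, the subspace R_{k×k,ℓ} of R_{k×k} is a conformal subalgebra (closed under ∂ and under all n-th products), it is a simple conformal algebra in its own right, and its minimal weight is ℓ: R_{k×k,ℓ} ∩ R_{k×k}^{(n)} = {0} for n < ℓ while R_{k×k,ℓ} ∩ R_{k×k}^{(ℓ)} ≠ {0}, where R_{k×k}^{(n)} = span{u(m₁,m₂) : u ∈ A, m₁+m₂+1 = n}. -/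
/-- The subspace `R_{k×k,ℓ} = span{u(m, n+ℓ-1) : u ∈ A, m, n ∈ ℕ}` (`ℓ ≥ 1`). -/
noncomputable def Rkkl (F : Type*) [Field F] (k ℓ : ℕ) :
    Submodule F (MatCarrier F k) :=
  Submodule.span F {x | ∃ (u : Matrix (Fin k) (Fin k) F) (m n : ℕ),
    x = Finsupp.single (m, n + ℓ - 1) u}

/-!
Multiply `w` by `u(a, b)` with `b` very large, at the largest order that does not kill `w`: only the
`u v` half of the product survives, and it returns exactly the terms of `w` of top first degree.
With `a` very large, the `v u` half returns the terms of top second degree. A nonzero ideal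
therefore contains a nonzero monomial. On monomials the same two products move the exponents at will
and multiply the coefficient on the left or on the right, so the `v` with `v(0, N)` in the ideal
form a nonzero two-sided ideal of `A`, which is everything when `A` is simple.
-/

theorem span_single_eq_supported (R : Type*) {ι M : Type*} [Semiring R] [AddCommMonoid M]
    [Module R M] (s : Set ι) :
    Submodule.span R {x : ι →₀ M | ∃ i ∈ s, ∃ u, x = Finsupp.single i u} =
      Finsupp.supported M R s := by
  apply le_antisymm
  · rw [Submodule.span_le]
    rintro _ ⟨i, hi, u, rfl⟩
    exact Finsupp.single_mem_supported R u hi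
  · intro x hx
    rw [← Finsupp.sum_single x]
    exact Submodule.sum_mem _ fun i hi =>
      Submodule.subset_span ⟨i, (Finsupp.mem_supported R x).mp hx hi, x i, rfl⟩

section Graded

variable (F M : Type*) [CommSemiring F] [AddCommMonoid M] [Module F M]

/-- The operator `∂` on `M ⊗ F[t₁,t₂]` for an arbitrary `F`-module `M` of coefficients, with
`u(m,n)` encoded as `Finsupp.single (m, n) u`. -/
noncomputable def conformalDeriv : (ℕ × ℕ →₀ M) →ₗ[F] (ℕ × ℕ →₀ M) :=
  Finsupp.lsum F fun p =>
    ((p.1 + 1 : ℕ) : F) • Finsupp.lsingle (p.1 + 1, p.2) +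
    ((p.2 + 1 : ℕ) : F) • Finsupp.lsingle (p.1, p.2 + 1)

/-- The subspace of `M ⊗ F[t₁,t₂]` spanned by the `u(m,n)` with `N ≤ n`; it is the paper's
`R_{k×k,ℓ}` for `N = ℓ - 1`, a parametrization that avoids truncated subtraction. -/
noncomputable def conformalLevel (N : ℕ) : Submodule F (ℕ × ℕ →₀ M) :=
  Finsupp.supported M F {q | N ≤ q.2}

/-- The weight space of `M ⊗ F[t₁,t₂]` spanned by the `u(m₁,m₂)` with `m₁ + m₂ + 1 = n`. -/
noncomputable def conformalWeight (n : ℕ) : Submodule F (ℕ × ℕ →₀ M) :=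
  Finsupp.supported M F {q | q.1 + q.2 + 1 = n}

variable {F M} {N : ℕ}

theorem single_mem_conformalLevel {m n : ℕ} (hn : N ≤ n) (u : M) :
    Finsupp.single (m, n) u ∈ conformalLevel F M N :=
  Finsupp.single_mem_supported F u hn

theorem le_snd_of_mem_conformalLevel {x : ℕ × ℕ →₀ M} (hx : x ∈ conformalLevel F M N)
    {q : ℕ × ℕ} (hq : q ∈ x.support) : N ≤ q.2 :=
  (Finsupp.mem_supported F x).mp hx hq

theorem conformalDeriv_apply (f : ℕ × ℕ →₀ M) :
    conformalDeriv F M f = f.sum fun p u =>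
      ((p.1 + 1 : ℕ) : F) • Finsupp.single (p.1 + 1, p.2) u +
      ((p.2 + 1 : ℕ) : F) • Finsupp.single (p.1, p.2 + 1) u :=
  rfl

theorem conformalDeriv_mem_conformalLevel {x : ℕ × ℕ →₀ M} (hx : x ∈ conformalLevel F M N) :
    conformalDeriv F M x ∈ conformalLevel F M N := by
  rw [conformalDeriv_apply]
  refine Submodule.sum_mem _ fun p hp => ?_
  have hp : N ≤ p.2 := le_snd_of_mem_conformalLevel hx hp
  exact add_mem (Submodule.smul_mem _ _ (single_mem_conformalLevel hp _))
    (Submodule.smul_mem _ _ (single_mem_conformalLevel (Nat.le_succ_of_le hp) _))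

theorem conformalLevel_inf_conformalWeight_of_le {n : ℕ} (hn : n ≤ N) :
    conformalLevel F M N ⊓ conformalWeight F M n = ⊥ := by
  refine (Finsupp.disjoint_supported_supported ?_).eq_bot
  rw [Set.disjoint_left]
  intro q (hN : N ≤ q.2) (hq : q.1 + q.2 + 1 = n)
  lia

theorem conformalLevel_inf_conformalWeight_succ_ne_bot [Nontrivial M] :
    conformalLevel F M N ⊓ conformalWeight F M (N + 1) ≠ ⊥ := by
  obtain ⟨u, hu⟩ := exists_ne (0 : M)
  have u_mem : Finsupp.single (0, N) u ∈ conformalLevel F M N ⊓ conformalWeight F M (N + 1) :=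
    ⟨single_mem_conformalLevel le_rfl u, Finsupp.single_mem_supported F u (by simp)⟩
  exact Submodule.ne_bot_iff _ |>.mpr ⟨_, u_mem, Finsupp.single_ne_zero.mpr hu⟩

end Graded

section Products

/-- The coefficient of the `u v` half of the `s`-th product of `u(p₁,p₂)` and `v(n,n₂)`. The
condition is `s ≤ p₂ + n` rather than `s ≤ p₁ + p₂ + n`, because the last binomial coefficient
vanishes in between. The `v u` half has the same coefficient with the two degrees exchanged. -/
def conformalCoeff (F : Type*) [Ring F] (s : ℕ) (p : ℕ × ℕ) (n : ℕ) : F :=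
  if s ≤ p.2 + n then
    (-1) ^ p.2 * ((n + p.2).choose p.2 : F) * ((p.1 + p.2 + n - s).choose p.1 : F)
  else 0

/-- The `s`-th product on `R_A = A ⊗ F[t₁,t₂]` for an arbitrary `F`-algebra `A`, as an
`F`-bilinear map. The subtractions truncate only where the coefficient vanishes. -/
noncomputable def conformalProd (F A : Type*) [CommRing F] [Ring A] [Algebra F A] (s : ℕ) :
    (ℕ × ℕ →₀ A) →ₗ[F] (ℕ × ℕ →₀ A) →ₗ[F] (ℕ × ℕ →₀ A) :=
  Finsupp.lsum F fun p => LinearMap.flip <| Finsupp.lsum F fun q => LinearMap.flip <|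
    conformalCoeff F s p q.1 •
      (LinearMap.mul F A).compr₂ (Finsupp.lsingle (p.1 + p.2 + q.1 - s, q.2)) -
    conformalCoeff F s p.swap q.2 •
      (LinearMap.mul F A).flip.compr₂ (Finsupp.lsingle (q.1, p.1 + p.2 + q.2 - s))

theorem conformalCoeff_of_lt {F : Type*} [Ring F] {s n : ℕ} {p : ℕ × ℕ} (h : p.2 + n < s) :
    conformalCoeff F s p n = 0 :=
  if_neg h.not_ge

theorem conformalCoeff_eq_ite {F : Type*} [Ring F] (s : ℕ) (p : ℕ × ℕ) (n : ℕ) :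
    conformalCoeff F s p n = if s ≤ p.1 + p.2 + n then
      (-1) ^ p.2 * ((n + p.2).choose p.2 : F) * ((p.1 + p.2 + n - s).choose p.1 : F) else 0 := by
  by_cases h : s ≤ p.2 + n
  · rw [conformalCoeff, if_pos h, if_pos (by lia)]
  · rw [conformalCoeff_of_lt (not_le.mp h)]
    split_ifs
    · rw [Nat.choose_eq_zero_of_lt (show p.1 + p.2 + n - s < p.1 by lia), Nat.cast_zero, mul_zero]
    · rfl

theorem conformalCoeff_ne_zero {F : Type*} [Ring F] [NoZeroDivisors F] [CharZero F] {s n : ℕ}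
    {p : ℕ × ℕ} (h : s ≤ p.2 + n) : conformalCoeff F s p n ≠ 0 := by
  have first_ne : (n + p.2).choose p.2 ≠ 0 := (Nat.choose_pos (by lia)).ne'
  have second_ne : (p.1 + p.2 + n - s).choose p.1 ≠ 0 := (Nat.choose_pos (by lia)).ne'
  rw [conformalCoeff, if_pos h]
  exact mul_ne_zero (mul_ne_zero (pow_ne_zero _ (neg_ne_zero.mpr one_ne_zero))
    (Nat.cast_ne_zero.mpr first_ne)) (Nat.cast_ne_zero.mpr second_ne)

variable {F A : Type*} [CommRing F] [Ring A] [Algebra F A] {N : ℕ}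

theorem conformalProd_single_left (s : ℕ) (p : ℕ × ℕ) (u : A) (g : ℕ × ℕ →₀ A) :
    conformalProd F A s (Finsupp.single p u) g = g.sum fun q v =>
      conformalCoeff F s p q.1 • Finsupp.single (p.1 + p.2 + q.1 - s, q.2) (u * v) -
      conformalCoeff F s p.swap q.2 • Finsupp.single (q.1, p.1 + p.2 + q.2 - s) (v * u) := by
  rw [conformalProd, Finsupp.lsum_single, LinearMap.flip_apply, Finsupp.lsum_apply, Finsupp.sum,
    LinearMap.sum_apply]
  rfl

theorem conformalProd_apply (s : ℕ) (f g : ℕ × ℕ →₀ A) :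
    conformalProd F A s f g = f.sum fun p u => g.sum fun q v =>
      conformalCoeff F s p q.1 • Finsupp.single (p.1 + p.2 + q.1 - s, q.2) (u * v) -
      conformalCoeff F s p.swap q.2 • Finsupp.single (q.1, p.1 + p.2 + q.2 - s) (v * u) := by
  conv_lhs => rw [← Finsupp.sum_single f]
  simp only [Finsupp.sum, map_sum, LinearMap.sum_apply]
  exact Finset.sum_congr rfl fun p _ => conformalProd_single_left s p (f p) g

theorem conformalProd_mem_conformalLevel {f g : ℕ × ℕ →₀ A} (hf : f ∈ conformalLevel F A N)
    (hg : g ∈ conformalLevel F A N) (s : ℕ) :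
    conformalProd F A s f g ∈ conformalLevel F A N := by
  rw [conformalProd_apply]
  refine Submodule.sum_mem _ fun p hp => Submodule.sum_mem _ fun q hq => ?_
  have hp : N ≤ p.2 := le_snd_of_mem_conformalLevel hf hp
  have hq : N ≤ q.2 := le_snd_of_mem_conformalLevel hg hq
  refine sub_mem (Submodule.smul_mem _ _ (single_mem_conformalLevel hq _)) ?_
  by_cases hs : s ≤ p.1 + q.2
  · exact Submodule.smul_mem _ _ (single_mem_conformalLevel (by lia) _)
  · rw [conformalCoeff_of_lt (by simpa using hs), zero_smul]
    exact zero_mem _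

theorem conformalProd_single_eq_sum_top_fst {w : ℕ × ℕ →₀ A} {a b m : ℕ} (u : A)
    (hm : ∀ q ∈ w.support, q.1 ≤ m) (hb : ∀ q ∈ w.support, a + q.2 < b + m) :
    conformalProd F A (b + m) (Finsupp.single (a, b) u) w =
      conformalCoeff F (b + m) (a, b) m •
        (w.filter (·.1 = m)).sum fun q v => Finsupp.single (a, q.2) (u * v) := by
  rw [conformalProd_single_left, Finsupp.smul_sum, Finsupp.sum_filter_index, Finsupp.sum,
    Finsupp.support_filter, Finset.sum_filter]
  refine Finset.sum_congr rfl fun q hq => ?_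
  rw [conformalCoeff_of_lt (p := (a, b).swap) (hb q hq), zero_smul, sub_zero]
  split_ifs with h
  · rw [h, add_assoc, Nat.add_sub_cancel]
  · rw [conformalCoeff_of_lt (by grind), zero_smul]

theorem conformalProd_single_eq_sum_top_snd {w : ℕ × ℕ →₀ A} {a b n : ℕ} (u : A)
    (hn : ∀ q ∈ w.support, q.2 ≤ n) (ha : ∀ q ∈ w.support, b + q.1 < a + n) :
    conformalProd F A (a + n) (Finsupp.single (a, b) u) w =
      -conformalCoeff F (a + n) (b, a) n •
        (w.filter (·.2 = n)).sum fun q v => Finsupp.single (q.1, b) (v * u) := by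
  rw [conformalProd_single_left, Finsupp.smul_sum, Finsupp.sum_filter_index, Finsupp.sum,
    Finsupp.support_filter, Finset.sum_filter]
  refine Finset.sum_congr rfl fun q hq => ?_
  rw [conformalCoeff_of_lt (p := (a, b)) (ha q hq), zero_smul, zero_sub, Prod.swap_prod_mk]
  split_ifs with h
  · rw [h, add_comm a b, add_assoc, Nat.add_sub_cancel, neg_smul]
  · rw [conformalCoeff_of_lt (by grind), zero_smul, neg_zero]

end Products

section Nontriviality

variable {F A : Type*} [Field F] [CharZero F] [Ring A] [Algebra F A] {N : ℕ}

theorem exists_conformalProd_ne_zero [Nontrivial A] :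
    ∃ f ∈ conformalLevel F A N, ∃ g ∈ conformalLevel F A N, ∃ s : ℕ,
      conformalProd F A s f g ≠ 0 := by
  refine ⟨Finsupp.single (0, N) 1, single_mem_conformalLevel le_rfl 1,
    Finsupp.single (1, N) 1, single_mem_conformalLevel le_rfl 1, N + 1, ?_⟩
  have right_half : conformalCoeff F (N + 1) (Prod.swap (0, N)) N = 0 :=
    conformalCoeff_of_lt (by simp)
  have left_half : conformalCoeff F (N + 1) (0, N) 1 ≠ 0 := conformalCoeff_ne_zero le_rfl
  rw [conformalProd_single_left, Finsupp.sum_single_index (by simp), right_half, zero_smul,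
    sub_zero]
  exact smul_ne_zero left_half (by simp)

end Nontriviality

/-- `I` is stable under left multiplication by `conformalLevel F A N` for all products: the part
of being an ideal of the conformal algebra `R_{A,N+1}` that involves the products. -/
def IsConformalProdStable {F A : Type*} [CommRing F] [Ring A] [Algebra F A] (N : ℕ)
    (I : Submodule F (ℕ × ℕ →₀ A)) : Prop :=
  ∀ f ∈ conformalLevel F A N, ∀ g ∈ I, ∀ s : ℕ, conformalProd F A s f g ∈ I

namespace IsConformalProdStable

variable {F A : Type*} [Field F] [CharZero F] [Ring A] [Algebra F A] {N : ℕ}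
  {I : Submodule F (ℕ × ℕ →₀ A)}

theorem sum_top_fst_mem (hI : IsConformalProdStable N I) {w : ℕ × ℕ →₀ A} (hw : w ∈ I) {m : ℕ}
    (hm : ∀ q ∈ w.support, q.1 ≤ m) (a : ℕ) (u : A) :
    ((w.filter (·.1 = m)).sum fun q v => Finsupp.single (a, q.2) (u * v)) ∈ I := by
  obtain ⟨b, hNb, hb⟩ : ∃ b, N ≤ b ∧ ∀ q ∈ w.support, a + q.2 < b + m := by
    refine ⟨N + a + w.support.sup Prod.snd + 1, by lia, fun q hq => ?_⟩
    have : q.2 ≤ w.support.sup Prod.snd := Finset.le_sup hq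
    lia
  have prod_mem := hI _ (single_mem_conformalLevel (m := a) hNb u) w hw (b + m)
  rw [conformalProd_single_eq_sum_top_fst u hm hb] at prod_mem
  exact (I.smul_mem_iff (conformalCoeff_ne_zero (p := (a, b)) le_rfl)).mp prod_mem

theorem sum_top_snd_mem (hI : IsConformalProdStable N I) {w : ℕ × ℕ →₀ A} (hw : w ∈ I) {n : ℕ}
    (hn : ∀ q ∈ w.support, q.2 ≤ n) {b : ℕ} (hb : N ≤ b) (u : A) :
    ((w.filter (·.2 = n)).sum fun q v => Finsupp.single (q.1, b) (v * u)) ∈ I := by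
  obtain ⟨a, ha⟩ : ∃ a, ∀ q ∈ w.support, b + q.1 < a + n := by
    refine ⟨b + w.support.sup Prod.fst + 1, fun q hq => ?_⟩
    have : q.1 ≤ w.support.sup Prod.fst := Finset.le_sup hq
    lia
  have prod_mem := hI _ (single_mem_conformalLevel (m := a) hb u) w hw (a + n)
  rw [conformalProd_single_eq_sum_top_snd u hn ha] at prod_mem
  have coeff_ne : -conformalCoeff F (a + n) (b, a) n ≠ 0 :=
    neg_ne_zero.mpr (conformalCoeff_ne_zero le_rfl)
  exact (I.smul_mem_iff coeff_ne).mp prod_mem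

theorem single_mul_left_mem (hI : IsConformalProdStable N I) {m n : ℕ} {v : A}
    (hv : Finsupp.single (m, n) v ∈ I) (a : ℕ) (u : A) :
    Finsupp.single (a, n) (u * v) ∈ I := by
  have degree_le : ∀ q ∈ (Finsupp.single (m, n) v).support, q.1 ≤ m := fun q hq => by
    rw [Finset.mem_singleton.mp (Finsupp.support_single_subset hq)]
  have top_mem := hI.sum_top_fst_mem hv degree_le a u
  rwa [Finsupp.filter_single_of_pos (fun q : ℕ × ℕ => q.1 = m) rfl,
    Finsupp.sum_single_index (by simp)] at top_mem

theorem single_mul_right_mem (hI : IsConformalProdStable N I) {m n : ℕ} {v : A}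
    (hv : Finsupp.single (m, n) v ∈ I) {b : ℕ} (hb : N ≤ b) (u : A) :
    Finsupp.single (m, b) (v * u) ∈ I := by
  have degree_le : ∀ q ∈ (Finsupp.single (m, n) v).support, q.2 ≤ n := fun q hq => by
    rw [Finset.mem_singleton.mp (Finsupp.support_single_subset hq)]
  have top_mem := hI.sum_top_snd_mem hv degree_le hb u
  rwa [Finsupp.filter_single_of_pos (fun q : ℕ × ℕ => q.2 = n) rfl,
    Finsupp.sum_single_index (by simp)] at top_mem

theorem filter_top_fst_mem (hI : IsConformalProdStable N I) {w : ℕ × ℕ →₀ A} (hw : w ∈ I) {m : ℕ}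
    (hm : ∀ q ∈ w.support, q.1 ≤ m) : w.filter (·.1 = m) ∈ I := by
  rw [← Finsupp.sum_single (w.filter (·.1 = m))]
  convert hI.sum_top_fst_mem hw hm m 1 using 1
  refine Finsupp.sum_congr fun q hq => ?_
  rw [Finsupp.support_filter, Finset.mem_filter] at hq
  rw [one_mul, ← hq.2]

theorem exists_single_mem_of_ne_bot (hI : IsConformalProdStable N I) (hI_ne : I ≠ ⊥) :
    ∃ m : ℕ, ∃ v ≠ 0, Finsupp.single (m, N) v ∈ I := by
  obtain ⟨w, hw, w_ne⟩ := I.exists_mem_ne_zero_of_ne_bot hI_ne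
  obtain ⟨p, hp, p_max⟩ := w.support.exists_max_image Prod.fst
    (Finsupp.support_nonempty_iff.mpr w_ne)
  let row := w.filter (·.1 = p.1)
  have mem_row {q : ℕ × ℕ} : q ∈ row.support ↔ q ∈ w.support ∧ q.1 = p.1 := by
    rw [Finsupp.support_filter, Finset.mem_filter]
  have row_mem : row ∈ I := hI.filter_top_fst_mem hw p_max
  obtain ⟨q, hq, q_max⟩ := row.support.exists_max_image Prod.snd ⟨p, mem_row.mpr ⟨hp, rfl⟩⟩
  have row_top : row.filter (·.2 = q.2) = Finsupp.single q (row q) := by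
    refine Finsupp.eq_single_iff.mpr ⟨fun r hr => ?_, Finsupp.filter_apply_pos _ _ rfl⟩
    rw [Finsupp.support_filter, Finset.mem_filter] at hr
    have same_fst : r.1 = q.1 := (mem_row.mp hr.1).2.trans (mem_row.mp hq).2.symm
    exact Finset.mem_singleton.mpr (Prod.ext same_fst hr.2)
  have top_mem := hI.sum_top_snd_mem row_mem q_max le_rfl 1
  rw [row_top, Finsupp.sum_single_index (by simp), mul_one] at top_mem
  exact ⟨q.1, row q, Finsupp.mem_support_iff.mp hq, top_mem⟩

theorem eq_conformalLevel_of_ne_bot [IsSimpleRing A] (hI : IsConformalProdStable N I)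
    (hI_le : I ≤ conformalLevel F A N) (hI_ne : I ≠ ⊥) : I = conformalLevel F A N := by
  let J : TwoSidedIdeal A := .mk' {v | Finsupp.single (0, N) v ∈ I} (by simp)
    (fun hu hv => by simpa using add_mem hu hv) (fun hu => by simpa using hu)
    (fun hv => hI.single_mul_left_mem hv 0 _) (fun hu => hI.single_mul_right_mem hu le_rfl _)
  obtain ⟨m, v, v_ne, hv⟩ := hI.exists_single_mem_of_ne_bot hI_ne
  have hvJ : v ∈ J := by
    simpa [J, TwoSidedIdeal.mem_mk'] using hI.single_mul_left_mem hv 0 1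
  have one_mem : Finsupp.single (0, N) (1 : A) ∈ I := by
    simpa [J, TwoSidedIdeal.mem_mk'] using IsSimpleRing.one_mem_of_ne_zero_mem J v_ne hvJ
  refine le_antisymm hI_le fun x hx => ?_
  rw [← Finsupp.sum_single x]
  refine Submodule.sum_mem _ fun q hq => ?_
  simpa using hI.single_mul_right_mem (hI.single_mul_left_mem one_mem q.1 1)
    (le_snd_of_mem_conformalLevel hx hq) (x q)

end IsConformalProdStable

theorem Rkkl_simple_subalgebra_general (F A : Type*) [Field F] [CharZero F] [Ring A] [Algebra F A]
    [IsSimpleRing A] (N : ℕ) :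
    (∀ x ∈ conformalLevel F A N, conformalDeriv F A x ∈ conformalLevel F A N) ∧
    (∀ f ∈ conformalLevel F A N, ∀ g ∈ conformalLevel F A N, ∀ s : ℕ,
      conformalProd F A s f g ∈ conformalLevel F A N) ∧
    (∃ f ∈ conformalLevel F A N, ∃ g ∈ conformalLevel F A N, ∃ s : ℕ,
      conformalProd F A s f g ≠ 0) ∧
    (∀ I : Submodule F (ℕ × ℕ →₀ A), I ≤ conformalLevel F A N →
      (∀ u ∈ conformalLevel F A N, ∀ w ∈ I, ∀ s : ℕ, conformalProd F A s u w ∈ I) →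
      I = ⊥ ∨ I = conformalLevel F A N) ∧
    (∀ n < N + 1, conformalLevel F A N ⊓ conformalWeight F A n = ⊥) ∧
    conformalLevel F A N ⊓ conformalWeight F A (N + 1) ≠ ⊥ :=
  ⟨fun _ => conformalDeriv_mem_conformalLevel,
    fun _ hf _ hg => conformalProd_mem_conformalLevel hf hg,
    exists_conformalProd_ne_zero,
    fun _ hI_le hI => or_iff_not_imp_left.mpr
      (IsConformalProdStable.eq_conformalLevel_of_ne_bot hI hI_le),
    fun _ hn => conformalLevel_inf_conformalWeight_of_le (Nat.le_of_lt_succ hn),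
    conformalLevel_inf_conformalWeight_succ_ne_bot⟩

section Matrices

variable (F : Type*) [Field F] (k : ℕ)

theorem mD_eq_conformalDeriv :
    mD F k = conformalDeriv F (Matrix (Fin k) (Fin k) F) :=
  rfl

theorem mProd_eq_conformalProd (s : ℕ) (f g : MatCarrier F k) :
    mProd F k s f g = conformalProd F (Matrix (Fin k) (Fin k) F) s f g := by
  simp only [conformalProd_apply, mProd, conformalCoeff_eq_ite, ite_smul, zero_smul,
    Prod.fst_swap, Prod.snd_swap, add_comm]

theorem Rkkl_succ_eq_conformalLevel (N : ℕ) :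
    Rkkl F k (N + 1) = conformalLevel F (Matrix (Fin k) (Fin k) F) N := by
  rw [Rkkl, conformalLevel, ← span_single_eq_supported]
  congr 1
  ext x
  constructor
  · rintro ⟨u, m, n, rfl⟩
    exact ⟨(m, n + N), Nat.le_add_left N n, u, rfl⟩
  · rintro ⟨⟨m, n⟩, hn : N ≤ n, u, rfl⟩
    exact ⟨u, m, n - N, by rw [← add_assoc, Nat.add_sub_cancel, Nat.sub_add_cancel hn]⟩

theorem mWeight_eq_conformalWeight (n : ℕ) :
    mWeight F k n = conformalWeight F (Matrix (Fin k) (Fin k) F) n := by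
  rw [mWeight, conformalWeight, ← span_single_eq_supported]
  congr 1
  ext x
  constructor
  · rintro ⟨u, m₁, m₂, h, rfl⟩
    exact ⟨(m₁, m₂), h, u, rfl⟩
  · rintro ⟨⟨m₁, m₂⟩, h, u, rfl⟩
    exact ⟨u, m₁, m₂, h, rfl⟩

end Matrices

/-- **Theorem 4.1** (for `R_{k×k,ℓ}`): for every `ℓ ≥ 1`, `R_{k×k,ℓ}` is a conformal
subalgebra of `R_{k×k}` (closed under `∂` and all `n`-th products), it is a simple
conformal algebra in its own right, and its minimal weight is `ℓ`. -/
theorem Rkkl_simple_subalgebra (F : Type*) [Field F] [CharZero F]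
    (k ℓ : ℕ) (hk : 1 ≤ k) (hℓ : 1 ≤ ℓ) :
    -- conformal subalgebra: closed under ∂ and under all n-th products
    (∀ x ∈ Rkkl F k ℓ, mD F k x ∈ Rkkl F k ℓ) ∧
    (∀ f ∈ Rkkl F k ℓ, ∀ g ∈ Rkkl F k ℓ, ∀ s : ℕ, mProd F k s f g ∈ Rkkl F k ℓ) ∧
    -- simple: nonzero products and no nontrivial ideals
    (∃ f ∈ Rkkl F k ℓ, ∃ g ∈ Rkkl F k ℓ, ∃ s : ℕ, mProd F k s f g ≠ 0) ∧
    (∀ I : Submodule F (MatCarrier F k), I ≤ Rkkl F k ℓ →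
      (∀ x ∈ I, mD F k x ∈ I) →
      (∀ u ∈ Rkkl F k ℓ, ∀ w ∈ I, ∀ s : ℕ, mProd F k s u w ∈ I) →
      I = ⊥ ∨ I = Rkkl F k ℓ) ∧
    -- minimal weight ℓ
    (∀ n < ℓ, Rkkl F k ℓ ⊓ mWeight F k n = ⊥) ∧
    (Rkkl F k ℓ ⊓ mWeight F k ℓ ≠ ⊥) := by
  have : NeZero k := ⟨Nat.one_le_iff_ne_zero.mp hk⟩
  obtain ⟨N, rfl⟩ := Nat.exists_eq_add_of_le' hℓ
  obtain ⟨deriv_mem, prod_mem, prod_ne_zero, eq_bot_or_eq, weight_lt, weight_eq⟩ :=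
    Rkkl_simple_subalgebra_general F (Matrix (Fin k) (Fin k) F) N
  simp only [Rkkl_succ_eq_conformalLevel, mD_eq_conformalDeriv, mProd_eq_conformalProd,
    mWeight_eq_conformalWeight]
  exact ⟨deriv_mem, prod_mem, prod_ne_zero, fun I hI_le _ hI => eq_bot_or_eq I hI_le hI,
    weight_lt, weight_eq⟩
end

section
/- Let k = 2k₁ be even. For every ℓ ≥ 1, the subspace R†_{k×k,ℓ} of R_{k×k} is a conformal subalgebra (closed under ∂ and under all n-th products), it is a simple conformal algebra in its own right, and its minimal weight is ℓ: R†_{k×k,ℓ} ∩ R_{k×k}^{(n)} = {0} for n < ℓ while R†_{k×k,ℓ} ∩ R_{k×k}^{(ℓ)} ≠ {0}, where R_{k×k}^{(n)} = span{u(m₁,m₂) : u ∈ A, m₁+m₂+1 = n}. -/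
/-- For even `k = k₁ + k₁`, the involutive anti-automorphism
`u† = [[0,-I],[I,0]] · uᵀ · [[0,I],[-I,0]]` of `M_k(F)`. -/
noncomputable def mDagger (F : Type*) [Field F] (k₁ : ℕ)
    (u : Matrix (Fin (k₁ + k₁)) (Fin (k₁ + k₁)) F) :
    Matrix (Fin (k₁ + k₁)) (Fin (k₁ + k₁)) F :=
  (Matrix.reindex finSumFinEquiv finSumFinEquiv
      (Matrix.fromBlocks (0 : Matrix (Fin k₁) (Fin k₁) F) (-1) 1 0)) *
    u.transpose *
  (Matrix.reindex finSumFinEquiv finSumFinEquiv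
      (Matrix.fromBlocks (0 : Matrix (Fin k₁) (Fin k₁) F) 1 (-1) 0))

/-- The subspace `R†_{k×k,ℓ} = span{binom(n+ℓ-1,ℓ-1)·u(m,n+ℓ-1)
- (-1)^{ℓ-1}·binom(m+ℓ-1,ℓ-1)·u†(n,m+ℓ-1) : u ∈ A, m, n ∈ ℕ}` (`ℓ ≥ 1`, `k = k₁+k₁`). -/
noncomputable def RkklDagger (F : Type*) [Field F] (k₁ ℓ : ℕ) :
    Submodule F (MatCarrier F (k₁ + k₁)) :=
  Submodule.span F {x | ∃ (u : Matrix (Fin (k₁ + k₁)) (Fin (k₁ + k₁)) F) (m n : ℕ),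
    x = (((n + ℓ - 1).choose (ℓ - 1) : F)) • Finsupp.single (m, n + ℓ - 1) u -
        ((-1 : F) ^ (ℓ - 1) * (((m + ℓ - 1).choose (ℓ - 1) : F))) •
          Finsupp.single (n, m + ℓ - 1) (mDagger F k₁ u)}

/-!
Write `ψ` for multiplication by the divided power `t₂^L / L!` (up to normalization of the basis),
`σ` for `u(m,n) ↦ u†(n,m)` and `L = ℓ - 1`. The generators of `R†_ℓ` are the images of the
`u(m,n)` under `ψ ∘ (1 - (-1)^L σ)`. The `s`-th product of `ψ P` and `ψ Q` equals
`ψ (H P Q - (-1)^L σ (H (σ P) (σ Q)))` for a bilinear map `H`; since `σ` acts as `-(-1)^L` on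
`P = (1 - (-1)^L σ) p`, this is again of the form `ψ (1 - (-1)^L σ) (…)`.

For simplicity, pull an ideal back along `ψ ∘ (1 - (-1)^L σ)`. The last nonvanishing product with
a generator picks out the top `t₁`-coefficient of an element, multiplies it by an arbitrary `u` and
moves it to an arbitrary power of `t₁`. Doing this at most twice leads to a nonzero constant, then
simplicity of the coefficient algebra gives all `u(m,0)`, and `∂` gives all `u(m,n)`.
-/

open Finsupp

section Preliminaries

theorem neg_one_pow_mul_self (R : Type*) [Ring R] (n : ℕ) : (-1 : R) ^ n * (-1) ^ n = 1 :=
  pow_mul_pow_eq_one n (by simp)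

theorem neg_one_pow_smul_smul (R : Type*) {M : Type*} [Ring R] [AddCommGroup M] [Module R M]
    (n : ℕ) (x : M) : (-1 : R) ^ n • (-1 : R) ^ n • x = x := by
  rw [smul_smul, neg_one_pow_mul_self, one_smul]

theorem choose_mul_choose_add_right (b L M : ℕ) :
    (M + L).choose (b + L) * (b + L).choose L = (M + L).choose L * M.choose b := by
  simpa using Nat.choose_mul (n := M + L) (Nat.le_add_left L b)

theorem mem_of_forall_mul_mul_mem {A : Type*} [Ring A] [IsSimpleRing A] {C : AddSubgroup A}
    {c : A} (hc : c ≠ 0) (h : ∀ u v, u * c * v ∈ C) (a : A) : a ∈ C := by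
  let J : TwoSidedIdeal A := .mk' {x | ∀ u v, u * x * v ∈ C} (by simp)
    (fun hx hy u v => by simpa [mul_add, add_mul] using add_mem (hx u v) (hy u v))
    (fun hx u v => by simpa using hx u v)
    (fun {x _} hy u v => by simpa [mul_assoc] using hy (u * x) v)
    (fun {_ y} hx u v => by simpa [mul_assoc] using hx u (y * v))
  have one_mem : (1 : A) ∈ J := IsSimpleRing.one_mem_of_ne_zero_mem J hc (by simpa [J] using h)
  have mul_mem : ∀ u v, u * v ∈ C := by simpa [J] using one_mem
  simpa using mul_mem a 1

end Preliminaries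

section AntiInvolution

variable {F A : Type*} [CommRing F] [Ring A] [Algebra F A]

/-- A linear anti-involution of an algebra: a linear involution reversing products. -/
structure IsAntiInvolution (τ : A →ₗ[F] A) : Prop where
  map_mul (a b : A) : τ (a * b) = τ b * τ a
  involutive : Function.Involutive τ

theorem IsAntiInvolution.map_one {τ : A →ₗ[F] A} (hτ : IsAntiInvolution τ) : τ 1 = 1 := by
  simpa [hτ.involutive 1] using (hτ.map_mul 1 (τ 1)).symm

theorem IsAntiInvolution.apply_ne_zero {τ : A →ₗ[F] A} (hτ : IsAntiInvolution τ) {a : A}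
    (ha : a ≠ 0) : τ a ≠ 0 :=
  (map_ne_zero_iff τ hτ.involutive.injective).2 ha

end AntiInvolution

section LeftCoeff

variable (F : Type*) [CommRing F]

/-- The coefficient of `(uv)(a+b+c-s, d)` in the `s`-th product of `u(a,b)` and `v(c,d)`. The case
distinction excludes the truncated difference `a + b + c - s`. -/
def leftCoeff (a b c s : ℕ) : F :=
  if s ≤ a + b + c then (-1) ^ b * (c + b).choose b * (a + b + c - s).choose a else 0

theorem leftCoeff_of_lt {a b c s : ℕ} (h : b + c < s) : leftCoeff F a b c s = 0 := by
  unfold leftCoeff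
  split_ifs
  · rw [Nat.choose_eq_zero_of_lt (by lia : a + b + c - s < a), Nat.cast_zero, mul_zero]
  · rfl

theorem leftCoeff_add (a b c : ℕ) :
    leftCoeff F a b c (b + c) = (-1) ^ b * (c + b).choose b := by
  simp [leftCoeff, add_assoc]

theorem leftCoeff_swap {a b d L M s : ℕ} (h : a + b + d + L = M + s) :
    ((b + L).choose L * (d + L).choose L : F) * leftCoeff F (b + L) a (d + L) s =
      (-1) ^ L * ((a + L).choose L * (M + L).choose L) * leftCoeff F b (a + L) d s := by
  have choose_swap : (b + L).choose L * (d + L).choose L *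
      ((d + L + a).choose a * (M + L).choose (b + L)) =
      (a + L).choose L * (M + L).choose L * ((d + a + L).choose (a + L) * M.choose b) := by
    calc
      _ = ((M + L).choose (b + L) * (b + L).choose L) *
          ((d + a + L).choose (d + L) * (d + L).choose L) := by
        rw [Nat.add_right_comm d a L, Nat.choose_symm_add]; ring
      _ = ((M + L).choose L * M.choose b) *
          ((d + a + L).choose (a + L) * (a + L).choose L) := by
        rw [choose_mul_choose_add_right b, choose_mul_choose_add_right d,
          choose_mul_choose_add_right a, Nat.choose_symm_add (a := d)]
      _ = _ := by ring
  have choose_swap_cast := congrArg (Nat.cast (R := F)) choose_swap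
  push_cast at choose_swap_cast
  have sign : (-1 : F) ^ L * (-1) ^ (a + L) = (-1) ^ a := by
    rw [pow_add, mul_left_comm, neg_one_pow_mul_self, mul_one]
  rw [leftCoeff, leftCoeff, if_pos (by lia), if_pos (by lia), ← add_assoc d a, ← sign,
    show b + L + a + (d + L) - s = M + L by lia, show b + (a + L) + d - s = M by lia]
  linear_combination (-1) ^ L * (-1) ^ (a + L) * choose_swap_cast

end LeftCoeff

section Bilinear

variable {F ι V W : Type*} [CommRing F] [AddCommGroup V] [Module F V] [AddCommGroup W] [Module F W]

/-- The bilinear map on finitely supported functions with prescribed values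
`(single p u, single q v) ↦ h p q u v`. -/
noncomputable def bilinearExtension (h : ι → ι → V →ₗ[F] V →ₗ[F] W) :
    (ι →₀ V) →ₗ[F] (ι →₀ V) →ₗ[F] W :=
  Finsupp.lsum F fun p => (Finsupp.lsum F fun q => (h p q).flip).flip

theorem bilinearExtension_apply (h : ι → ι → V →ₗ[F] V →ₗ[F] W) (f g : ι →₀ V) :
    bilinearExtension h f g = f.sum fun p u => g.sum fun q v => h p q u v := by
  simp [bilinearExtension, Finsupp.lsum_apply, Finsupp.sum, LinearMap.sum_apply]

theorem bilinearExtension_single_left (h : ι → ι → V →ₗ[F] V →ₗ[F] W) (p : ι) (u : V)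
    (g : ι →₀ V) : bilinearExtension h (single p u) g = g.sum fun q v => h p q u v := by
  rw [bilinearExtension_apply, Finsupp.sum_single_index (by simp)]

theorem bilinearExtension_single (h : ι → ι → V →ₗ[F] V →ₗ[F] W) (p q : ι) (u v : V) :
    bilinearExtension h (single p u) (single q v) = h p q u v := by
  simp [bilinearExtension]

end Bilinear

/-- The space `A ⊗ F[t₁,t₂]`, with `u ⊗ t₁^m t₂^n` encoded as `single (m, n) u`. -/
abbrev BiPoly (A : Type*) [Zero A] := ℕ × ℕ →₀ A

namespace BiPoly

section Operations

variable (F A : Type*) [CommRing F] [Ring A] [Algebra F A]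

/-- The operator `∂` on `A ⊗ F[t₁,t₂]`. -/
noncomputable def deriv : BiPoly A →ₗ[F] BiPoly A :=
  Finsupp.lsum F fun p =>
    ((p.1 + 1 : ℕ) : F) • lsingle (p.1 + 1, p.2) + ((p.2 + 1 : ℕ) : F) • lsingle (p.1, p.2 + 1)

/-- The bilinear map `(u, v) ↦ uv ⊗ t₁^m t₂^n`, where `p = (m, n)`. -/
noncomputable def mulMonomial (p : ℕ × ℕ) : A →ₗ[F] A →ₗ[F] BiPoly A :=
  (LinearMap.mul F A).compr₂ (lsingle p)

/-- The `s`-th product on `A ⊗ F[t₁,t₂]`. -/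
noncomputable def nthProd (s : ℕ) : BiPoly A →ₗ[F] BiPoly A →ₗ[F] BiPoly A :=
  bilinearExtension fun p q =>
    leftCoeff F p.1 p.2 q.1 s • mulMonomial F A (p.1 + p.2 + q.1 - s, q.2) +
    (-leftCoeff F p.2 p.1 q.2 s) • (mulMonomial F A (q.1, p.1 + p.2 + q.2 - s)).flip

/-- The first half of the `s`-th product, transported along `dividedShift F A L`. -/
noncomputable def halfProd (L s : ℕ) : BiPoly A →ₗ[F] BiPoly A →ₗ[F] BiPoly A :=
  bilinearExtension fun p q =>
    ((p.2 + L).choose L * leftCoeff F p.1 (p.2 + L) q.1 s) •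
      mulMonomial F A (p.1 + (p.2 + L) + q.1 - s, q.2)

/-- The map `u(m,n) ↦ binom(n+L,L) u(m,n+L)`; if `u(m,n)` is read as `u ⊗ t₁^m t₂^n / n!`, this is
multiplication by `t₂^L / L!`. -/
noncomputable def dividedShift (L : ℕ) : BiPoly A →ₗ[F] BiPoly A :=
  Finsupp.lsum F fun p => ((p.2 + L).choose L : F) • lsingle (p.1, p.2 + L)

/-- The weight space of `A ⊗ F[t₁,t₂]` spanned by the `u(m₁,m₂)` with `m₁ + m₂ + 1 = n`. -/
noncomputable def weightSpace (n : ℕ) : Submodule F (BiPoly A) :=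
  Submodule.span F {x | ∃ (u : A) (m₁ m₂ : ℕ), m₁ + m₂ + 1 = n ∧ x = single (m₁, m₂) u}

variable {F A}

theorem mulMonomial_apply (p : ℕ × ℕ) (u v : A) : mulMonomial F A p u v = single p (u * v) := rfl

theorem deriv_single (m n : ℕ) (u : A) :
    deriv F A (single (m, n) u) =
      ((m + 1 : ℕ) : F) • single (m + 1, n) u + ((n + 1 : ℕ) : F) • single (m, n + 1) u := by
  simp [deriv]

theorem nthProd_single (s a b c d : ℕ) (u v : A) :
    nthProd F A s (single (a, b) u) (single (c, d) v) =
      leftCoeff F a b c s • single (a + b + c - s, d) (u * v) -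
      leftCoeff F b a d s • single (c, a + b + d - s) (v * u) := by
  simp [nthProd, bilinearExtension_single, mulMonomial_apply, sub_eq_add_neg]

theorem halfProd_single (L s a b c d : ℕ) (u v : A) :
    halfProd F A L s (single (a, b) u) (single (c, d) v) =
      ((b + L).choose L * leftCoeff F a (b + L) c s) • single (a + (b + L) + c - s, d) (u * v) := by
  simp [halfProd, bilinearExtension_single, mulMonomial_apply]

theorem dividedShift_single (L m n : ℕ) (u : A) :
    dividedShift F A L (single (m, n) u) = ((n + L).choose L : F) • single (m, n + L) u := by
  simp [dividedShift]

theorem deriv_dividedShift (L : ℕ) (f : BiPoly A) :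
    deriv F A (dividedShift F A L f) = dividedShift F A L (deriv F A f) := by
  suffices deriv F A ∘ₗ dividedShift F A L = dividedShift F A L ∘ₗ deriv F A from
    LinearMap.congr_fun this f
  refine Finsupp.lhom_ext fun ⟨m, n⟩ u => ?_
  have choose_succ : ((n + L).choose L : F) * (n + L + 1 : ℕ) =
      (n + 1 : ℕ) * (n + 1 + L).choose L := by
    have := Nat.add_one_mul_choose_eq (n + L) n
    rw [Nat.choose_symm_add, Nat.add_right_comm, Nat.choose_symm_add] at this
    rw [Nat.add_right_comm n L 1, mul_comm, mul_comm ((n + 1 : ℕ) : F), ← Nat.cast_mul, this,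
      Nat.cast_mul]
  simp only [LinearMap.comp_apply, dividedShift_single, deriv_single, map_smul, map_add, smul_add,
    smul_smul, choose_succ, mul_comm ((n + L).choose L : F) (m + 1 : ℕ), Nat.add_right_comm n 1 L]

theorem dividedShift_apply_of_lt {L b : ℕ} (hb : b < L) (f : BiPoly A) (a : ℕ) :
    dividedShift F A L f (a, b) = 0 := by
  induction f using Finsupp.induction_linear with
  | zero => simp
  | add f g hf hg => simp [hf, hg]
  | single p u =>
    have : (p.1, p.2 + L) ≠ (a, b) := by grind
    rw [← Prod.mk.eta (p := p), dividedShift_single, Finsupp.smul_apply,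
      Finsupp.single_eq_of_ne this.symm, smul_zero]

theorem apply_eq_zero_of_mem_weightSpace {n : ℕ} {f : BiPoly A} (hf : f ∈ weightSpace F A n)
    {a b : ℕ} (h : a + b + 1 ≠ n) : f (a, b) = 0 := by
  have hle : weightSpace F A n ≤ LinearMap.ker (lapply (R := F) (a, b)) := by
    refine Submodule.span_le.2 ?_
    rintro _ ⟨u, m₁, m₂, hm, rfl⟩
    exact Finsupp.single_eq_of_ne (by grind)
  exact hle hf

end Operations

section Row

variable {F A : Type*} [CommRing F] [Ring A] [Algebra F A]

/-- The polynomial `Q` has degree at most `N` in the first variable `t₁`. -/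
def FstDegreeLE (Q : BiPoly A) (N : ℕ) : Prop :=
  ∀ a b, N < a → Q (a, b) = 0

variable (F) in
/-- The map taking `∑ₙ t₁ⁿ qₙ(t₂)` to `u t₁^m q_N(t₂)`. -/
noncomputable def mulRow (u : A) (N m : ℕ) : BiPoly A →ₗ[F] BiPoly A :=
  Finsupp.lsum F fun q => if q.1 = N then lsingle (m, q.2) ∘ₗ LinearMap.mulLeft F u else 0

theorem mulRow_eq_sum (u : A) (N m : ℕ) (Q : BiPoly A) :
    mulRow F u N m Q = Q.sum fun q v => if q.1 = N then single (m, q.2) (u * v) else 0 := by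
  rw [mulRow, Finsupp.lsum_apply]
  refine Finsupp.sum_congr fun q _ => ?_
  split_ifs <;> simp

theorem mulRow_apply (u : A) (N m : ℕ) (Q : BiPoly A) (a b : ℕ) :
    mulRow F u N m Q (a, b) = if a = m then u * Q (N, b) else 0 := by
  induction Q using Finsupp.induction_linear with
  | zero => simp
  | add f g hf hg => simp only [map_add, Finsupp.add_apply, hf, hg]; split_ifs <;> simp [mul_add]
  | single p v =>
    rw [mulRow_eq_sum, Finsupp.sum_single_index (by simp), Finsupp.single_apply, mul_ite, mul_zero]
    grind

theorem mulRow_eq_single {Q : BiPoly A} {N d : ℕ} (h : ∀ b, b ≠ d → Q (N, b) = 0) (u : A) (m : ℕ) :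
    mulRow F u N m Q = single (m, d) (u * Q (N, d)) := by
  ext ⟨a, b⟩
  rw [mulRow_apply]
  grind [mul_zero]

theorem fstDegreeLE_single (N n : ℕ) (u : A) : FstDegreeLE (single (N, n) u) N :=
  fun _ _ h => Finsupp.single_eq_of_ne (by grind)

theorem mulRow_single (u v : A) (N m n : ℕ) :
    mulRow F u N m (single (N, n) v) = single (m, n) (u * v) := by
  rw [mulRow_eq_single (d := n) fun b hb => Finsupp.single_eq_of_ne (by grind),
    Finsupp.single_eq_same]

theorem exists_lex_top {Q : BiPoly A} (hQ : Q ≠ 0) :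
    ∃ N n, Q (N, n) ≠ 0 ∧ FstDegreeLE Q N ∧ ∀ b, n < b → Q (N, b) = 0 := by
  obtain ⟨⟨N, n⟩, hmem, hmax⟩ := Finset.exists_max_image Q.support toLex
    (Finsupp.support_nonempty_iff.2 hQ)
  have eq_zero {p : ℕ × ℕ} (hp : toLex (N, n) < toLex p) : Q p = 0 := by
    by_contra hne
    exact (hmax p (Finsupp.mem_support_iff.2 hne)).not_gt hp
  exact ⟨N, n, Finsupp.mem_support_iff.1 hmem,
    fun a b hab => eq_zero (Prod.Lex.toLex_lt_toLex.2 (.inl hab)),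
    fun b hb => eq_zero (Prod.Lex.toLex_lt_toLex.2 (.inr ⟨rfl, hb⟩))⟩

theorem halfProd_single_left (L s a b : ℕ) (u : A) (Q : BiPoly A) :
    halfProd F A L s (single (a, b) u) Q = Q.sum fun q v =>
      ((b + L).choose L * leftCoeff F a (b + L) q.1 s) •
        single (a + (b + L) + q.1 - s, q.2) (u * v) := by
  simp [halfProd, bilinearExtension_single_left, mulMonomial_apply]

theorem FstDegreeLE.fst_le {Q : BiPoly A} {N : ℕ} (hQ : FstDegreeLE Q N) {q : ℕ × ℕ}
    (hq : q ∈ Q.support) : q.1 ≤ N :=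
  not_lt.1 fun h => Finsupp.mem_support_iff.1 hq (hQ _ _ h)

theorem FstDegreeLE.halfProd_single_eq_zero {Q : BiPoly A} {N : ℕ} (hQ : FstDegreeLE Q N)
    {L s b : ℕ} (hs : b + L + N < s) (a : ℕ) (u : A) :
    halfProd F A L s (single (a, b) u) Q = 0 := by
  rw [halfProd_single_left]
  refine Finset.sum_eq_zero fun q hq => ?_
  have := hQ.fst_le hq
  simp only [leftCoeff_of_lt F (by lia : b + L + q.1 < s), mul_zero, zero_smul]

theorem FstDegreeLE.halfProd_single_eq_mulRow {Q : BiPoly A} {N : ℕ} (hQ : FstDegreeLE Q N)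
    (L a b : ℕ) (u : A) :
    halfProd F A L (b + L + N) (single (a, b) u) Q =
      ((b + L).choose L * ((-1) ^ (b + L) * (N + (b + L)).choose (b + L)) : F) •
        mulRow F u N a Q := by
  rw [halfProd_single_left, mulRow_eq_sum, Finsupp.smul_sum]
  refine Finsupp.sum_congr fun q hq => ?_
  rcases (hQ.fst_le hq).eq_or_lt with h | h
  · rw [if_pos h, h, leftCoeff_add, add_assoc a, Nat.add_sub_cancel]
  · rw [if_neg h.ne, leftCoeff_of_lt F (by lia), mul_zero, zero_smul, smul_zero]

end Row

section Twist

variable {F A : Type*} [CommRing F] [Ring A] [Algebra F A]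

/-- The map `u(m,n) ↦ τ(u)(n,m)`. -/
noncomputable def swap (τ : A →ₗ[F] A) : BiPoly A →ₗ[F] BiPoly A :=
  Finsupp.lsum F fun p => lsingle p.swap ∘ₗ τ

/-- The antisymmetrization `1 - (-1)^L σ` with respect to `σ = swap τ`. -/
noncomputable def antisymmetrize (τ : A →ₗ[F] A) (L : ℕ) : BiPoly A →ₗ[F] BiPoly A :=
  LinearMap.id - (-1 : F) ^ L • swap τ

/-- The map sending `u(m,n)` to the generator
`binom(n+L,L)·u(m,n+L) - (-1)^L·binom(m+L,L)·τ(u)(n,m+L)` of the twisted subspace. -/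
noncomputable def twist (τ : A →ₗ[F] A) (L : ℕ) : BiPoly A →ₗ[F] BiPoly A :=
  dividedShift F A L ∘ₗ antisymmetrize τ L

/-- The analogue over `A` of `R†_{k×k,ℓ}`, indexed by `L = ℓ - 1` and with `τ` in place of `†`. -/
noncomputable def twistedSubspace (τ : A →ₗ[F] A) (L : ℕ) : Submodule F (BiPoly A) :=
  LinearMap.range (twist τ L)

variable (τ : A →ₗ[F] A)

theorem swap_single (m n : ℕ) (u : A) : swap τ (single (m, n) u) = single (n, m) (τ u) := by
  simp [swap]

theorem antisymmetrize_apply (L : ℕ) (f : BiPoly A) :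
    antisymmetrize τ L f = f - (-1 : F) ^ L • swap τ f := by
  simp [antisymmetrize]

theorem twist_apply (L : ℕ) (f : BiPoly A) :
    twist τ L f = dividedShift F A L (antisymmetrize τ L f) := rfl

theorem twist_mem (L : ℕ) (f : BiPoly A) : twist τ L f ∈ twistedSubspace τ L :=
  LinearMap.mem_range_self _ f

theorem swap_apply (f : BiPoly A) (a b : ℕ) : swap τ f (a, b) = τ (f (b, a)) := by
  induction f using Finsupp.induction_linear with
  | zero => simp
  | add f g hf hg => simp [hf, hg]
  | single p u =>
    rw [← Prod.mk.eta (p := p), swap_single, Finsupp.single_apply, Finsupp.single_apply]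
    grind

theorem deriv_swap (f : BiPoly A) : deriv F A (swap τ f) = swap τ (deriv F A f) := by
  suffices deriv F A ∘ₗ swap τ = swap τ ∘ₗ deriv F A from LinearMap.congr_fun this f
  refine Finsupp.lhom_ext fun ⟨m, n⟩ u => ?_
  simp only [LinearMap.comp_apply, swap_single, deriv_single, map_smul, map_add]
  exact add_comm _ _

theorem deriv_twist (L : ℕ) (f : BiPoly A) :
    deriv F A (twist τ L f) = twist τ L (deriv F A f) := by
  simp only [twist_apply, deriv_dividedShift, antisymmetrize_apply, map_sub, map_smul, deriv_swap]

theorem antisymmetrize_single_zero (L : ℕ) (a : A) :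
    antisymmetrize τ L (single (0, 0) a) = single (0, 0) (a - (-1 : F) ^ L • τ a) := by
  rw [antisymmetrize_apply, swap_single, Finsupp.smul_single, ← Finsupp.single_sub]

theorem twist_single (L m n : ℕ) (u : A) :
    twist τ L (single (m, n) u) = ((n + L).choose L : F) • single (m, n + L) u -
      ((-1 : F) ^ L * (m + L).choose L) • single (n, m + L) (τ u) := by
  rw [twist_apply, antisymmetrize_apply, swap_single, map_sub, map_smul, dividedShift_single,
    dividedShift_single, smul_smul]

theorem twist_single_zero (L : ℕ) (a : A) :
    twist τ L (single (0, 0) a) = single (0, L) (a - (-1 : F) ^ L • τ a) := by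
  simp [twist_single]

theorem twistedSubspace_eq_span (L : ℕ) :
    twistedSubspace τ L = Submodule.span F {x | ∃ (u : A) (m n : ℕ),
      x = twist τ L (single (m, n) u)} := by
  refine le_antisymm ?_ (Submodule.span_le.2 ?_)
  · rintro _ ⟨f, rfl⟩
    induction f using Finsupp.induction_linear with
    | zero => simp
    | add f g hf hg => rw [map_add]; exact add_mem hf hg
    | single p u => exact Submodule.subset_span ⟨u, p.1, p.2, rfl⟩
  · rintro _ ⟨u, m, n, rfl⟩
    exact twist_mem τ L _

variable {τ} (hτ : IsAntiInvolution τ)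
include hτ

theorem swap_swap (f : BiPoly A) : swap τ (swap τ f) = f := by
  ext ⟨a, b⟩
  rw [swap_apply, swap_apply, hτ.involutive]

theorem swap_antisymmetrize (L : ℕ) (f : BiPoly A) :
    swap τ (antisymmetrize τ L f) = -((-1 : F) ^ L • antisymmetrize τ L f) := by
  simp only [antisymmetrize_apply, map_sub, map_smul, swap_swap hτ, smul_sub,
    neg_one_pow_smul_smul, neg_sub]

theorem nthProd_dividedShift_single (L s a b c d : ℕ) (u v : A) :
    nthProd F A s (dividedShift F A L (single (a, b) u)) (dividedShift F A L (single (c, d) v)) =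
      dividedShift F A L (halfProd F A L s (single (a, b) u) (single (c, d) v) - (-1 : F) ^ L •
        swap τ (halfProd F A L s (swap τ (single (a, b) u)) (swap τ (single (c, d) v)))) := by
  simp only [dividedShift_single, swap_single, map_smul, LinearMap.smul_apply, nthProd_single,
    halfProd_single, map_sub, smul_sub, smul_smul, hτ.map_mul, hτ.involutive _]
  congr 1
  · congr 1
    ring
  · rcases le_or_gt s (a + b + d + L) with hs | hs
    · obtain ⟨M, hM⟩ := exists_add_of_le hs
      rw [add_comm s M] at hM
      rw [show a + (b + L) + (d + L) - s = M + L by lia, show b + (a + L) + d - s = M by lia]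
      congr 1
      linear_combination leftCoeff_swap F hM
    · rw [leftCoeff_of_lt F (by lia : a + (d + L) < s), leftCoeff_of_lt F (by lia : a + L + d < s)]
      simp only [mul_zero, zero_mul, zero_smul]

theorem nthProd_dividedShift (L s : ℕ) (P Q : BiPoly A) :
    nthProd F A s (dividedShift F A L P) (dividedShift F A L Q) =
      dividedShift F A L (halfProd F A L s P Q -
        (-1 : F) ^ L • swap τ (halfProd F A L s (swap τ P) (swap τ Q))) := by
  induction P using Finsupp.induction_linear with
  | zero => simp
  | add f g hf hg => simp only [map_add, LinearMap.add_apply, hf, hg, map_sub, smul_add]; abel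
  | single p u =>
    induction Q using Finsupp.induction_linear with
    | zero => simp
    | add f g hf hg => simp only [map_add, hf, hg, map_sub, smul_add]; abel
    | single q v => exact nthProd_dividedShift_single hτ L s p.1 p.2 q.1 q.2 u v

theorem nthProd_twist (L s : ℕ) (p q : BiPoly A) :
    nthProd F A s (twist τ L p) (twist τ L q) =
      twist τ L (halfProd F A L s (antisymmetrize τ L p) (antisymmetrize τ L q)) := by
  simp only [twist_apply, nthProd_dividedShift hτ, swap_antisymmetrize hτ, map_neg,
    LinearMap.neg_apply, neg_neg, map_smul, LinearMap.smul_apply, neg_one_pow_smul_smul, smul_neg]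
  rw [antisymmetrize_apply τ L (halfProd _ _ _ _ _ _)]

end Twist

section TopRow

variable {F A : Type*} [CommRing F] [Ring A] [Algebra F A] {τ : A →ₗ[F] A}

/-- The property of a subspace `K` that is satisfied by the preimages under `twist τ L` of ideals
of the twisted subspace: `K` contains all left multiples, moved to arbitrary powers of `t₁`, of the
top `t₁`-coefficients of antisymmetrizations of its elements. -/
def TopRowClosed (τ : A →ₗ[F] A) (L : ℕ) (K : Submodule F (BiPoly A)) : Prop :=
  ∀ w ∈ K, ∀ N, FstDegreeLE (antisymmetrize τ L w) N →
    ∀ u m, mulRow F u N m (antisymmetrize τ L w) ∈ K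

variable {L : ℕ} {K : Submodule F (BiPoly A)}

theorem antisymmetrize_mulRow_apply (τ : A →ₗ[F] A) (L N : ℕ) (Q : BiPoly A) (a b : ℕ) :
    antisymmetrize τ L (mulRow F 1 N 0 Q) (a, b) =
      (if a = 0 then Q (N, b) else 0) - (-1 : F) ^ L • if b = 0 then τ (Q (N, a)) else 0 := by
  rw [antisymmetrize_apply, Finsupp.sub_apply, Finsupp.smul_apply, swap_apply, mulRow_apply,
    mulRow_apply, one_mul, one_mul, apply_ite τ, map_zero]

theorem TopRowClosed.exists_forall_single_mul_mem (hτ : IsAntiInvolution τ)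
    (hK : TopRowClosed τ L K) {w : BiPoly A} (hw : w ∈ K) (hw₀ : antisymmetrize τ L w ≠ 0) :
    ∃ c ≠ 0, ∀ v, single (0, 0) (v * c) ∈ K := by
  obtain ⟨N, n, htop, hN, hn⟩ := exists_lex_top hw₀
  set Q := antisymmetrize τ L w
  rcases eq_or_ne n 0 with rfl | hn₀
  · refine ⟨Q (N, 0), htop, fun v => ?_⟩
    rw [← mulRow_eq_single (F := F) fun b hb => hn b (Nat.pos_of_ne_zero hb)]
    exact hK w hw N hN v 0
  · -- The top row of the antisymmetrized `N`-th row of `Q` is a constant, up to a power of `t₁`.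
    let w' := mulRow F 1 N 0 Q
    have hw' (a b : ℕ) := antisymmetrize_mulRow_apply τ L N Q a b
    have hdeg : FstDegreeLE (antisymmetrize τ L w') n := fun a b hab => by
      simp [w', hw', hn a hab, (Nat.zero_lt_of_lt hab).ne']
    refine ⟨antisymmetrize τ L w' (n, 0), ?_, fun v => ?_⟩
    · simpa [w', hw', hn₀, ((isUnit_neg_one (α := F)).pow L).smul_eq_zero] using
        hτ.apply_ne_zero htop
    · rw [← mulRow_eq_single (F := F) fun b hb => by simp [w', hw', hn₀, hb]]
      exact hK w' (hK w hw N hN 1 0) n hdeg v 0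

theorem TopRowClosed.single_mul_mem (hK : TopRowClosed τ L K) {a : A} (ha : single (0, 0) a ∈ K)
    (u : A) (m : ℕ) : single (m, 0) (u * (a - (-1 : F) ^ L • τ a)) ∈ K := by
  have := hK _ ha 0 (by rw [antisymmetrize_single_zero]; exact fstDegreeLE_single 0 0 _) u m
  rwa [antisymmetrize_single_zero, mulRow_single] at this

theorem TopRowClosed.single_zero_mem [IsSimpleRing A] (hτ : IsAntiInvolution τ)
    (hK : TopRowClosed τ L K) {c : A} (hc : c ≠ 0) (hcK : ∀ v, single (0, 0) (v * c) ∈ K) (a : A) :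
    single (0, 0) a ∈ K := by
  refine mem_of_forall_mul_mul_mem (C := (K.comap (lsingle (0, 0))).toAddSubgroup)
    (hτ.apply_ne_zero hc) (fun u v => ?_) a
  have hmul : u * τ c * v = (-1 : F) ^ L • (u * τ v * c - u * (τ v * c - (-1 : F) ^ L •
      τ (τ v * c))) := by
    rw [hτ.map_mul, hτ.involutive, mul_sub, ← mul_assoc u, sub_sub_cancel, mul_smul_comm,
      neg_one_pow_smul_smul, mul_assoc]
  change single (0, 0) (u * τ c * v) ∈ K
  rw [hmul, ← Finsupp.smul_single, Finsupp.single_sub]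
  exact K.smul_mem _ (K.sub_mem (hcK _) (hK.single_mul_mem (hcK (τ v)) u 0))

theorem TopRowClosed.single_fst_mem [IsSimpleRing A] (hτ : IsAntiInvolution τ)
    (hK : TopRowClosed τ L K) (hskew : ∃ a, a - (-1 : F) ^ L • τ a ≠ 0)
    (hK₀ : ∀ a, single (0, 0) a ∈ K) (m : ℕ) (a : A) : single (m, 0) a ∈ K := by
  obtain ⟨s, hs⟩ := hskew
  refine mem_of_forall_mul_mul_mem (C := (K.comap (lsingle (m, 0))).toAddSubgroup)
    hs (fun u v => ?_) a
  set t := s - (-1 : F) ^ L • τ s with ht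
  have hτt : (-1 : F) ^ L • τ t = -t := by
    rw [ht, map_sub, map_smul, hτ.involutive, smul_sub, neg_one_pow_smul_smul, neg_sub]
  -- The skew elements generate a two-sided ideal as a left ideal.
  have hmul : u * t * v = u * (t * v - (-1 : F) ^ L • τ (t * v)) - u * τ v * t := by
    rw [hτ.map_mul, ← mul_smul_comm, hτt]
    noncomm_ring
  change single (m, 0) (u * t * v) ∈ K
  rw [hmul, Finsupp.single_sub]
  exact K.sub_mem (hK.single_mul_mem (hK₀ _) u m) (hK.single_mul_mem (hK₀ s) _ m)

end TopRow

section Simplicity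

variable {F A : Type*} [Field F] [Ring A] [Algebra F A] {τ : A →ₗ[F] A} {L : ℕ}
  {K : Submodule F (BiPoly A)}

theorem exists_nthProd_twist_eq_smul_mulRow [CharZero F] (hτ : IsAntiInvolution τ) {N : ℕ}
    {w : BiPoly A} (hw : FstDegreeLE (antisymmetrize τ L w) N) (u : A) (m : ℕ) :
    ∃ f s, ∃ c : F, c ≠ 0 ∧ nthProd F A s (twist τ L f) (twist τ L w) =
      c • twist τ L (mulRow F u N m (antisymmetrize τ L w)) := by
  refine ⟨single (m, m + 1) u, m + 1 + L + N,
    (m + 1 + L).choose L * ((-1) ^ (m + 1 + L) * (N + (m + 1 + L)).choose (m + 1 + L)), ?_, ?_⟩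
  · have choose_ne_zero (n k : ℕ) : ((n + k).choose k : F) ≠ 0 :=
      Nat.cast_ne_zero.2 (Nat.choose_pos (Nat.le_add_left k n)).ne'
    exact mul_ne_zero (choose_ne_zero _ _) (mul_ne_zero (by simp) (choose_ne_zero _ _))
  · rw [nthProd_twist hτ, antisymmetrize_apply τ L (single _ _), swap_single, map_sub, map_smul,
      LinearMap.sub_apply, LinearMap.smul_apply, hw.halfProd_single_eq_mulRow,
      hw.halfProd_single_eq_zero (by lia), smul_zero, sub_zero, map_smul]

theorem eq_top_of_deriv_mem_of_single_mem [CharZero F] (hD : ∀ f ∈ K, deriv F A f ∈ K)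
    (hK : ∀ m a, single (m, 0) a ∈ K) : K = ⊤ := by
  have single_mem (n : ℕ) : ∀ m a, single (m, n) a ∈ K := by
    induction n with
    | zero => exact hK
    | succ n ih =>
      intro m a
      have hderiv := hD _ (ih m a)
      rw [deriv_single, K.add_mem_iff_right (K.smul_mem _ (ih (m + 1) a))] at hderiv
      exact (K.smul_mem_iff (Nat.cast_ne_zero.2 n.succ_ne_zero)).1 hderiv
  refine eq_top_iff.2 fun f _ => ?_
  induction f using Finsupp.induction_linear with
  | zero => exact K.zero_mem
  | add f g hf hg => exact K.add_mem (hf trivial) (hg trivial)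
  | single p a => exact single_mem p.2 p.1 a

theorem TopRowClosed.eq_top [CharZero F] [IsSimpleRing A] (hτ : IsAntiInvolution τ)
    (hskew : ∃ a, a - (-1 : F) ^ L • τ a ≠ 0) (hK : TopRowClosed τ L K)
    (hD : ∀ f ∈ K, deriv F A f ∈ K) {w : BiPoly A} (hw : w ∈ K)
    (hw₀ : antisymmetrize τ L w ≠ 0) : K = ⊤ := by
  obtain ⟨c, hc, hcK⟩ := hK.exists_forall_single_mul_mem hτ hw hw₀
  exact eq_top_of_deriv_mem_of_single_mem hD <|
    hK.single_fst_mem hτ hskew (hK.single_zero_mem hτ hc hcK)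

theorem eq_bot_or_eq_twistedSubspace [CharZero F] [IsSimpleRing A] (hτ : IsAntiInvolution τ)
    (hskew : ∃ a, a - (-1 : F) ^ L • τ a ≠ 0) {I : Submodule F (BiPoly A)}
    (hI : I ≤ twistedSubspace τ L) (hD : ∀ x ∈ I, deriv F A x ∈ I)
    (hmul : ∀ u ∈ twistedSubspace τ L, ∀ w ∈ I, ∀ s, nthProd F A s u w ∈ I) :
    I = ⊥ ∨ I = twistedSubspace τ L := by
  refine or_iff_not_imp_left.2 fun hbot => hI.antisymm ?_
  obtain ⟨x, hx, hx₀⟩ := I.exists_mem_ne_zero_of_ne_bot hbot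
  obtain ⟨w, rfl⟩ := hI hx
  have hclosed : TopRowClosed τ L (I.comap (twist τ L)) := fun w hw N hN u m => by
    obtain ⟨f, s, c, hc, hprod⟩ := exists_nthProd_twist_eq_smul_mulRow hτ hN u m
    exact (I.smul_mem_iff hc).1 (hprod ▸ hmul _ (twist_mem τ L f) _ hw s)
  have htop : I.comap (twist τ L) = ⊤ :=
    hclosed.eq_top hτ hskew (fun f hf => by simpa [deriv_twist] using hD _ hf) hx
      fun h => hx₀ (by rw [twist_apply, h, map_zero])
  rwa [twistedSubspace, LinearMap.range_le_iff_comap]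

theorem twist_single_skew_ne_zero [NeZero (2 : F)] (hτ : IsAntiInvolution τ) {a : A}
    (ha : a - (-1 : F) ^ L • τ a ≠ 0) :
    twist τ L (single (0, 0) (a - (-1 : F) ^ L • τ a)) ≠ 0 := by
  have two_smul_skew : a - (-1 : F) ^ L • τ a - (-1 : F) ^ L • τ (a - (-1 : F) ^ L • τ a) =
      (2 : F) • (a - (-1 : F) ^ L • τ a) := by
    rw [map_sub, map_smul, hτ.involutive, smul_sub, neg_one_pow_smul_smul]
    module
  rw [twist_single_zero, two_smul_skew, Ne, Finsupp.single_eq_zero]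
  exact smul_ne_zero two_ne_zero ha

theorem exists_nthProd_ne_zero [CharZero F] (hτ : IsAntiInvolution τ)
    (hskew : ∃ a, a - (-1 : F) ^ L • τ a ≠ 0) :
    ∃ f ∈ twistedSubspace τ L, ∃ g ∈ twistedSubspace τ L, ∃ s, nthProd F A s f g ≠ 0 := by
  obtain ⟨a, ha⟩ := hskew
  have hdeg : FstDegreeLE (antisymmetrize τ L (single (0, 0) a)) 0 := by
    rw [antisymmetrize_single_zero]
    exact fstDegreeLE_single 0 0 _
  obtain ⟨f, s, c, hc, hprod⟩ := exists_nthProd_twist_eq_smul_mulRow hτ hdeg 1 0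
  refine ⟨_, twist_mem τ L f, _, twist_mem τ L _, s, hprod ▸ smul_ne_zero hc ?_⟩
  rw [antisymmetrize_single_zero, mulRow_single, one_mul]
  exact twist_single_skew_ne_zero hτ ha

end Simplicity

section Weight

variable {F A : Type*} [CommRing F] [Ring A] [Algebra F A] (τ : A →ₗ[F] A)

theorem twistedSubspace_inf_weightSpace_eq_bot {L n : ℕ} (hn : n < L + 1) :
    twistedSubspace τ L ⊓ weightSpace F A n = ⊥ := by
  rw [Submodule.eq_bot_iff]
  rintro _ ⟨⟨f, rfl⟩, hf⟩
  ext ⟨a, b⟩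
  by_cases hab : a + b + 1 = n
  · exact dividedShift_apply_of_lt (by lia) _ _
  · exact apply_eq_zero_of_mem_weightSpace hf hab

theorem twistedSubspace_inf_weightSpace_ne_bot {L : ℕ}
    (hskew : ∃ a, a - (-1 : F) ^ L • τ a ≠ 0) :
    twistedSubspace τ L ⊓ weightSpace F A (L + 1) ≠ ⊥ := by
  obtain ⟨a, ha⟩ := hskew
  refine (Submodule.ne_bot_iff _).2 ⟨twist τ L (single (0, 0) a), ⟨twist_mem τ L _, ?_⟩, ?_⟩
  · rw [twist_single_zero]
    exact Submodule.subset_span ⟨_, 0, L, by lia, rfl⟩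
  · rwa [twist_single_zero, Ne, Finsupp.single_eq_zero]

end Weight

end BiPoly

section Matrix

open BiPoly Matrix

variable (F : Type*) [Field F] (k₁ : ℕ)

/-- The matrix `[[0,-I],[I,0]]` defining `†`, with rows and columns indexed by `Fin (k₁ + k₁)`. -/
noncomputable def symplecticForm : Matrix (Fin (k₁ + k₁)) (Fin (k₁ + k₁)) F :=
  reindexAlgEquiv F F finSumFinEquiv (J (Fin k₁) F)

theorem symplecticForm_mul_self : symplecticForm F k₁ * symplecticForm F k₁ = -1 := by
  rw [symplecticForm, ← map_mul, J_squared, map_neg, map_one]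

theorem symplecticForm_transpose : (symplecticForm F k₁)ᵀ = -symplecticForm F k₁ := by
  rw [symplecticForm, coe_reindexAlgEquiv, transpose_reindex, J_transpose]
  rfl

variable {F k₁}

theorem mDagger_eq (u : Matrix (Fin (k₁ + k₁)) (Fin (k₁ + k₁)) F) :
    mDagger F k₁ u = -(symplecticForm F k₁ * uᵀ * symplecticForm F k₁) := by
  have neg_form : reindex finSumFinEquiv finSumFinEquiv
      (fromBlocks (0 : Matrix (Fin k₁) (Fin k₁) F) 1 (-1) 0) = -symplecticForm F k₁ := by
    rw [symplecticForm, ← map_neg, J, fromBlocks_neg]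
    simp
  rw [mDagger, neg_form, mul_neg]
  rfl

variable (F k₁) in
/-- The map `†` of `M_{2k₁}(F)` as a linear map. -/
noncomputable def daggerLinearMap :
    Matrix (Fin (k₁ + k₁)) (Fin (k₁ + k₁)) F →ₗ[F] Matrix (Fin (k₁ + k₁)) (Fin (k₁ + k₁)) F where
  toFun := mDagger F k₁
  map_add' u v := by simp only [mDagger_eq, transpose_add]; noncomm_ring
  map_smul' c u := by simp [mDagger_eq]

theorem daggerLinearMap_apply (u : Matrix (Fin (k₁ + k₁)) (Fin (k₁ + k₁)) F) :
    daggerLinearMap F k₁ u = -(symplecticForm F k₁ * uᵀ * symplecticForm F k₁) :=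
  mDagger_eq u

theorem isAntiInvolution_daggerLinearMap : IsAntiInvolution (daggerLinearMap F k₁) where
  map_mul u v := by
    have : symplecticForm F k₁ * vᵀ * symplecticForm F k₁ *
        (symplecticForm F k₁ * uᵀ * symplecticForm F k₁) =
        symplecticForm F k₁ * vᵀ * (symplecticForm F k₁ * symplecticForm F k₁) * uᵀ *
          symplecticForm F k₁ := by noncomm_ring
    simp only [daggerLinearMap_apply, transpose_mul, neg_mul_neg, this, symplecticForm_mul_self]
    noncomm_ring
  involutive u := by
    have : symplecticForm F k₁ * (symplecticForm F k₁ * (u * symplecticForm F k₁)) *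
        symplecticForm F k₁ = (symplecticForm F k₁ * symplecticForm F k₁) * u *
          (symplecticForm F k₁ * symplecticForm F k₁) := by noncomm_ring
    simp [daggerLinearMap_apply, transpose_mul, symplecticForm_transpose, this,
      symplecticForm_mul_self]

theorem exists_sub_smul_daggerLinearMap_ne_zero [NeZero (2 : F)] (hk₁ : 1 ≤ k₁) (L : ℕ) :
    ∃ a, a - (-1 : F) ^ L • daggerLinearMap F k₁ a ≠ 0 := by
  have : NeZero (k₁ + k₁) := ⟨by lia⟩
  rcases L.even_or_odd with hL | hL
  · have ne_zero : symplecticForm F k₁ ≠ 0 := fun h => by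
      simpa [h] using symplecticForm_mul_self F k₁
    have dagger_form : daggerLinearMap F k₁ (symplecticForm F k₁) = -symplecticForm F k₁ := by
      simp [daggerLinearMap_apply, symplecticForm_transpose, symplecticForm_mul_self]
    refine ⟨symplecticForm F k₁, ?_⟩
    rw [hL.neg_one_pow, one_smul, dagger_form, sub_neg_eq_add,
      ← two_smul F (symplecticForm F k₁)]
    exact smul_ne_zero two_ne_zero ne_zero
  · refine ⟨1, ?_⟩
    rw [hL.neg_one_pow, isAntiInvolution_daggerLinearMap.map_one, neg_one_smul, sub_neg_eq_add,
      ← two_smul F (1 : Matrix _ _ F)]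
    exact smul_ne_zero two_ne_zero one_ne_zero

theorem mD_eq_deriv {k : ℕ} (f : MatCarrier F k) :
    mD F k f = BiPoly.deriv F (Matrix (Fin k) (Fin k) F) f := by
  rw [mD, BiPoly.deriv, Finsupp.lsum_apply]
  rfl

theorem mProd_eq_nthProd {k : ℕ} (s : ℕ) (f g : MatCarrier F k) :
    mProd F k s f g = nthProd F (Matrix (Fin k) (Fin k) F) s f g := by
  rw [nthProd, bilinearExtension_apply, mProd]
  refine Finsupp.sum_congr fun p _ => Finsupp.sum_congr fun q _ => ?_
  simp only [LinearMap.add_apply, LinearMap.smul_apply, LinearMap.flip_apply, mulMonomial_apply]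
  simp only [leftCoeff, neg_smul, ite_smul, zero_smul, sub_eq_add_neg, add_comm p.2 p.1]

theorem RkklDagger_eq_twistedSubspace (L : ℕ) :
    RkklDagger F k₁ (L + 1) = twistedSubspace (daggerLinearMap F k₁) L := by
  simp only [twistedSubspace_eq_span, twist_single]
  rfl

end Matrix

open BiPoly in
theorem RkklDagger_simple_subalgebra_general {F A : Type*} [Field F] [CharZero F] [Ring A]
    [Algebra F A] [IsSimpleRing A] {τ : A →ₗ[F] A} (hτ : IsAntiInvolution τ) {L : ℕ}
    (hskew : ∃ a, a - (-1 : F) ^ L • τ a ≠ 0) :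
    (∀ x ∈ twistedSubspace τ L, deriv F A x ∈ twistedSubspace τ L) ∧
    (∀ f ∈ twistedSubspace τ L, ∀ g ∈ twistedSubspace τ L, ∀ s : ℕ,
      nthProd F A s f g ∈ twistedSubspace τ L) ∧
    (∃ f ∈ twistedSubspace τ L, ∃ g ∈ twistedSubspace τ L, ∃ s : ℕ, nthProd F A s f g ≠ 0) ∧
    (∀ I : Submodule F (BiPoly A), I ≤ twistedSubspace τ L →
      (∀ x ∈ I, deriv F A x ∈ I) →
      (∀ u ∈ twistedSubspace τ L, ∀ w ∈ I, ∀ s : ℕ, nthProd F A s u w ∈ I) →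
      I = ⊥ ∨ I = twistedSubspace τ L) ∧
    (∀ n < L + 1, twistedSubspace τ L ⊓ weightSpace F A n = ⊥) ∧
    twistedSubspace τ L ⊓ weightSpace F A (L + 1) ≠ ⊥ := by
  refine ⟨?_, ?_, exists_nthProd_ne_zero hτ hskew,
    fun I => eq_bot_or_eq_twistedSubspace hτ hskew,
    fun n => twistedSubspace_inf_weightSpace_eq_bot τ,
    twistedSubspace_inf_weightSpace_ne_bot τ hskew⟩
  · rintro _ ⟨f, rfl⟩
    exact deriv_twist τ L f ▸ twist_mem τ L _
  · rintro _ ⟨f, rfl⟩ _ ⟨g, rfl⟩ s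
    exact nthProd_twist hτ L s f g ▸ twist_mem τ L _

/-- **Theorem 4.1** (for `R†_{k×k,ℓ}`, `k = 2k₁` even): for every `ℓ ≥ 1`,
`R†_{k×k,ℓ}` is a conformal subalgebra of `R_{k×k}` (closed under `∂` and all
`n`-th products), it is a simple conformal algebra in its own right, and its
minimal weight is `ℓ`. -/
theorem RkklDagger_simple_subalgebra (F : Type*) [Field F] [CharZero F]
    (k₁ ℓ : ℕ) (hk₁ : 1 ≤ k₁) (hℓ : 1 ≤ ℓ) :
    -- conformal subalgebra: closed under ∂ and under all n-th products
    (∀ x ∈ RkklDagger F k₁ ℓ, mD F (k₁ + k₁) x ∈ RkklDagger F k₁ ℓ) ∧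
    (∀ f ∈ RkklDagger F k₁ ℓ, ∀ g ∈ RkklDagger F k₁ ℓ, ∀ s : ℕ,
      mProd F (k₁ + k₁) s f g ∈ RkklDagger F k₁ ℓ) ∧
    -- simple: nonzero products and no nontrivial ideals
    (∃ f ∈ RkklDagger F k₁ ℓ, ∃ g ∈ RkklDagger F k₁ ℓ, ∃ s : ℕ,
      mProd F (k₁ + k₁) s f g ≠ 0) ∧
    (∀ I : Submodule F (MatCarrier F (k₁ + k₁)), I ≤ RkklDagger F k₁ ℓ →
      (∀ x ∈ I, mD F (k₁ + k₁) x ∈ I) →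
      (∀ u ∈ RkklDagger F k₁ ℓ, ∀ w ∈ I, ∀ s : ℕ, mProd F (k₁ + k₁) s u w ∈ I) →
      I = ⊥ ∨ I = RkklDagger F k₁ ℓ) ∧
    -- minimal weight ℓ
    (∀ n < ℓ, RkklDagger F k₁ ℓ ⊓ mWeight F (k₁ + k₁) n = ⊥) ∧
    (RkklDagger F k₁ ℓ ⊓ mWeight F (k₁ + k₁) ℓ ≠ ⊥) := by
  obtain ⟨L, rfl⟩ := Nat.exists_eq_add_of_le' hℓ
  have : Nonempty (Fin (k₁ + k₁)) := ⟨⟨0, by lia⟩⟩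
  simp only [RkklDagger_eq_twistedSubspace, mD_eq_deriv, mProd_eq_nthProd]
  exact RkklDagger_simple_subalgebra_general isAntiInvolution_daggerLinearMap
    (exists_sub_smul_daggerLinearMap_ne_zero hk₁ L)
end

section
/- For every ℓ ≥ 2 and k ≥ 2, the conformal algebra R_{k×k,ℓ} is generated by its subspace of minimal weight ℓ, namely by X^{(ℓ)} = span{u(0,ℓ-1) : u ∈ A}: R_{k×k,ℓ} equals the span of all iterated products u¹⁽ⁿ¹⁾(u²⁽ⁿ²⁾(⋯(uˢ⁽ⁿˢ⁾v)⋯)) with s ∈ ℕ, u¹,…,uˢ, v ∈ X^{(ℓ)}, and n₁,…,nₛ ∈ ℕ. -/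
/-- Iterated products `u¹⁽ⁿ¹⁾(u²⁽ⁿ²⁾(⋯(uˢ⁽ⁿˢ⁾v)⋯))` with all `uⁱ, v` in `S`
(the case `s = 0` being `v` itself). -/
inductive IterProd {R : Type*} (P : ℕ → R → R → R) (S : Set R) : R → Prop
  | base : ∀ v ∈ S, IterProd P S v
  | step : ∀ u ∈ S, ∀ (n : ℕ) (w : R), IterProd P S w → IterProd P S (P n u w)

/-!
Let `e i j` denote the matrix units and put `L = ℓ - 1`. Acting by `u(0,L)` on `v(a,b)` gives a
multiple of `(u * v)(a',b)` minus a multiple of `(v * u)(a,b')`, and the second (first) term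
disappears when `v * u = 0` (`u * v = 0`) or when its exponent `b'` (`a'`) would be negative.
For `i ≠ j` the generators of `e j j` and `1 - e j j` therefore raise the exponents of `e j i` one
at a time, which needs `L ≥ 1`, so every `(e j i)(a,b)` with `L ≤ b` is an iterated product.
Acting on `(e j i)(a + b + 1, b)` by the generator of `M * e i j` then gives, up to a nonzero
scalar absorbed by rescaling `M`, `(M * e i i)(a,b)`, and `M` is the sum of the `M * e i i`.
-/

/-- The space `X^{(L+1)} = {u(0,L) : u ∈ A}` of minimal weight in `R_{k×k,L+1}`. Indexing by the
exponent `L` instead of the weight avoids natural-number subtraction. -/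
def minimalWeightSpace (F : Type*) [Field F] (k L : ℕ) : Set (MatCarrier F k) :=
  {y | ∃ u : Matrix (Fin k) (Fin k) F, y = Finsupp.single (0, L) u}

section

variable {F : Type*} [Field F] {k : ℕ}

theorem mProd_single_single (s m₁ m₂ n₁ n₂ : ℕ) (u v : Matrix (Fin k) (Fin k) F) :
    mProd F k s (Finsupp.single (m₁, m₂) u) (Finsupp.single (n₁, n₂) v) =
      (if s ≤ m₁ + m₂ + n₁ then
        ((-1 : F) ^ m₂ * ((n₁ + m₂).choose m₂ : F) * ((m₁ + m₂ + n₁ - s).choose m₁ : F)) •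
          Finsupp.single (m₁ + m₂ + n₁ - s, n₂) (u * v)
      else 0) -
      (if s ≤ m₁ + m₂ + n₂ then
        ((-1 : F) ^ m₁ * ((n₂ + m₁).choose m₁ : F) * ((m₁ + m₂ + n₂ - s).choose m₂ : F)) •
          Finsupp.single (n₁, m₁ + m₂ + n₂ - s) (v * u)
      else 0) := by
  rw [mProd, Finsupp.sum_single_index (by simp [Finsupp.sum]), Finsupp.sum_single_index (by simp)]

theorem mProd_single_single_eq_left {s m₁ m₂ n₁ n₂ : ℕ} {u v : Matrix (Fin k) (Fin k) F}
    (hs : s ≤ m₁ + m₂ + n₁) (h : v * u = 0 ∨ m₁ + m₂ + n₂ < s) :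
    mProd F k s (Finsupp.single (m₁, m₂) u) (Finsupp.single (n₁, n₂) v) =
      ((-1 : F) ^ m₂ * ((n₁ + m₂).choose m₂ : F) * ((m₁ + m₂ + n₁ - s).choose m₁ : F)) •
        Finsupp.single (m₁ + m₂ + n₁ - s, n₂) (u * v) := by
  rw [mProd_single_single, if_pos hs]
  rcases h with h | h
  · simp [h]
  · rw [if_neg h.not_ge, sub_zero]

theorem mProd_single_single_eq_right {s m₁ m₂ n₁ n₂ : ℕ} {u v : Matrix (Fin k) (Fin k) F}
    (hs : s ≤ m₁ + m₂ + n₂) (h : u * v = 0 ∨ m₁ + m₂ + n₁ < s) :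
    mProd F k s (Finsupp.single (m₁, m₂) u) (Finsupp.single (n₁, n₂) v) =
      -((-1 : F) ^ m₁ * ((n₂ + m₁).choose m₁ : F) * ((m₁ + m₂ + n₂ - s).choose m₂ : F)) •
        Finsupp.single (n₁, m₁ + m₂ + n₂ - s) (v * u) := by
  rw [mProd_single_single, if_pos hs, neg_smul]
  rcases h with h | h
  · simp [h]
  · rw [if_neg h.not_ge, zero_sub]

theorem Rkkl_eq_supported (ℓ : ℕ) :
    Rkkl F k ℓ = Finsupp.supported (Matrix (Fin k) (Fin k) F) F {p : ℕ × ℕ | ℓ - 1 ≤ p.2} := by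
  apply le_antisymm
  · rw [Rkkl, Submodule.span_le]
    rintro _ ⟨u, m, n, rfl⟩
    exact Finsupp.single_mem_supported F u (show ℓ - 1 ≤ n + ℓ - 1 by omega)
  · intro x hx
    rw [← x.sum_single]
    refine Submodule.sum_mem _ fun p hp => Submodule.subset_span ⟨x p, p.1, p.2 + 1 - ℓ, ?_⟩
    have hp₂ : ℓ - 1 ≤ p.2 := hx hp
    rw [show p.2 + 1 - ℓ + ℓ - 1 = p.2 by omega]

theorem mProd_mem_Rkkl {ℓ : ℕ} {x y : MatCarrier F k} (hx : x ∈ Rkkl F k ℓ)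
    (hy : y ∈ Rkkl F k ℓ) (s : ℕ) : mProd F k s x y ∈ Rkkl F k ℓ := by
  rw [Rkkl_eq_supported] at *
  refine Submodule.sum_mem _ fun p hp => Submodule.sum_mem _ fun q hq => Submodule.sub_mem _ ?_ ?_
  · have hq₂ : ℓ - 1 ≤ q.2 := hy hq
    split_ifs
    · exact Submodule.smul_mem _ _ (Finsupp.single_mem_supported F _ hq₂)
    · exact Submodule.zero_mem _
  · have hp₂ : ℓ - 1 ≤ p.2 := hx hp
    split_ifs
    · rcases lt_or_ge (p.1 + p.2 + q.2 - s) p.2 with hlt | hge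
      · simp only [Nat.choose_eq_zero_of_lt hlt, Nat.cast_zero, mul_zero, zero_smul,
          Submodule.zero_mem]
      · exact Submodule.smul_mem _ _ (Finsupp.single_mem_supported F _ (hp₂.trans hge))
    · exact Submodule.zero_mem _

theorem IterProd.mem_of_subset {R : Type*} {P : ℕ → R → R → R} {S T : Set R} (hST : S ⊆ T)
    (hT : ∀ u ∈ T, ∀ v ∈ T, ∀ n, P n u v ∈ T) {x : R} (hx : IterProd P S x) : x ∈ T := by
  induction hx with
  | base v hv => exact hST hv
  | step u hu n w _ ih => exact hT u (hST hu) w ih n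

theorem single_mem_minimalWeightSpace {L : ℕ} (u : Matrix (Fin k) (Fin k) F) :
    Finsupp.single (0, L) u ∈ minimalWeightSpace F k L :=
  ⟨u, rfl⟩

variable [CharZero F] {L : ℕ}

theorem IterProd.single_mul_left {a b a' : ℕ} {u v : Matrix (Fin k) (Fin k) F}
    (hv : IterProd (mProd F k) (minimalWeightSpace F k L) (Finsupp.single (a, b) v))
    (ha' : a' ≤ L + a) (h : v * u = 0 ∨ a' + b < a) :
    IterProd (mProd F k) (minimalWeightSpace F k L) (Finsupp.single (a', b) (u * v)) := by
  have hc : (-1 : F) ^ L * ((a + L).choose L : F) ≠ 0 :=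
    mul_ne_zero (pow_ne_zero _ (neg_ne_zero.mpr one_ne_zero))
      (Nat.cast_ne_zero.mpr (Nat.choose_pos (Nat.le_add_left L a)).ne')
  set c := (-1 : F) ^ L * ((a + L).choose L : F)
  have hvanish : v * (c⁻¹ • u) = 0 ∨ 0 + L + b < L + a - a' :=
    h.imp (fun hvu => by rw [mul_smul_comm, hvu, smul_zero]) (by omega)
  have hprod : mProd F k (L + a - a') (Finsupp.single (0, L) (c⁻¹ • u)) (Finsupp.single (a, b) v) =
      Finsupp.single (a', b) (u * v) := by
    rw [mProd_single_single_eq_left (by omega) hvanish, Nat.choose_zero_right, Nat.cast_one,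
      mul_one, Finsupp.smul_single, smul_mul_assoc, smul_inv_smul₀ hc,
      show 0 + L + a - (L + a - a') = a' by omega]
  rw [← hprod]
  exact IterProd.step _ (single_mem_minimalWeightSpace _) _ _ hv

theorem IterProd.single_mul_right {a b b' : ℕ} {u v : Matrix (Fin k) (Fin k) F}
    (hv : IterProd (mProd F k) (minimalWeightSpace F k L) (Finsupp.single (a, b) v))
    (hL : L ≤ b') (hb' : b' ≤ L + b) (h : u * v = 0 ∨ a + b' < b) :
    IterProd (mProd F k) (minimalWeightSpace F k L) (Finsupp.single (a, b') (v * u)) := by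
  have hc : -(b'.choose L : F) ≠ 0 :=
    neg_ne_zero.mpr (Nat.cast_ne_zero.mpr (Nat.choose_pos hL).ne')
  set c := -(b'.choose L : F) with c_def
  have hvanish : (c⁻¹ • u) * v = 0 ∨ 0 + L + a < L + b - b' :=
    h.imp (fun huv => by rw [smul_mul_assoc, huv, smul_zero]) (by omega)
  have hprod : mProd F k (L + b - b') (Finsupp.single (0, L) (c⁻¹ • u)) (Finsupp.single (a, b) v) =
      Finsupp.single (a, b') (v * u) := by
    rw [mProd_single_single_eq_right (by omega) hvanish, pow_zero, Nat.choose_zero_right,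
      Nat.cast_one, one_mul, one_mul, show 0 + L + b - (L + b - b') = b' by omega, ← c_def,
      Finsupp.smul_single, mul_smul_comm, smul_inv_smul₀ hc]
  rw [← hprod]
  exact IterProd.step _ (single_mem_minimalWeightSpace _) _ _ hv

theorem iterProd_single_of_mul_eq_self_of_mul_eq_zero (hL : 1 ≤ L)
    {u v : Matrix (Fin k) (Fin k) F} (huv : u * v = v) (hvu : v * u = 0) (a : ℕ) {b : ℕ}
    (hb : L ≤ b) :
    IterProd (mProd F k) (minimalWeightSpace F k L) (Finsupp.single (a, b) v) := by
  induction b, hb using Nat.le_induction with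
  | base =>
    induction a with
    | zero => exact IterProd.base _ (single_mem_minimalWeightSpace v)
    | succ a ih => simpa only [huv] using ih.single_mul_left (a' := a + 1) (by omega) (.inl hvu)
  | succ b hb ih =>
    have hv_right : v * (1 - u) = v := by rw [mul_sub, mul_one, hvu, sub_zero]
    have hv_left : (1 - u) * v = 0 := by rw [sub_mul, one_mul, huv, sub_self]
    simpa only [hv_right] using
      ih.single_mul_right (b' := b + 1) (by omega) (by omega) (.inl hv_left)

theorem iterProd_single_mul_matrixUnit (hk : 2 ≤ k) (hL : 1 ≤ L) (M : Matrix (Fin k) (Fin k) F)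
    (i : Fin k) (a : ℕ) {b : ℕ} (hb : L ≤ b) :
    IterProd (mProd F k) (minimalWeightSpace F k L)
      (Finsupp.single (a, b) (M * Matrix.single i i 1)) := by
  have : Nontrivial (Fin k) := Fin.nontrivial_iff_two_le.mpr hk
  obtain ⟨j, hji⟩ := exists_ne i
  have h_offDiag : IterProd (mProd F k) (minimalWeightSpace F k L)
      (Finsupp.single (a + b + 1, b) (Matrix.single j i 1)) :=
    iterProd_single_of_mul_eq_self_of_mul_eq_zero hL (u := Matrix.single j j 1)
      (by simp) (by simp [hji.symm]) _ hb
  have h_factor : M * Matrix.single i i 1 = (M * Matrix.single i j 1) * Matrix.single j i 1 := by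
    simp [mul_assoc]
  rw [h_factor]
  exact h_offDiag.single_mul_left (by omega) (.inr (by omega))

theorem single_mem_span_iterProd (hk : 2 ≤ k) (hL : 1 ≤ L) (M : Matrix (Fin k) (Fin k) F)
    (a : ℕ) {b : ℕ} (hb : L ≤ b) :
    Finsupp.single (a, b) M ∈
      Submodule.span F {x | IterProd (mProd F k) (minimalWeightSpace F k L) x} := by
  have hM : M = ∑ i, M * Matrix.single i i 1 := by
    rw [← Finset.mul_sum, Matrix.sum_single_one, mul_one]
  rw [hM, Finsupp.single_finsetSum]
  exact Submodule.sum_mem _ fun i _ =>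
    Submodule.subset_span (iterProd_single_mul_matrixUnit hk hL M i a hb)

end

/-- **Theorem 4.2** (for `R_{k×k,ℓ}`): for `ℓ ≥ 2` and `k ≥ 2`, the conformal algebra
`R_{k×k,ℓ}` is generated by its subspace of minimal weight `ℓ`, namely by
`X^{(ℓ)} = span{u(0,ℓ-1) : u ∈ A} = {u(0,ℓ-1) : u ∈ A}`. -/
theorem Rkkl_generated_by_minimal_weight (F : Type*) [Field F] [CharZero F]
    (k ℓ : ℕ) (hk : 2 ≤ k) (hℓ : 2 ≤ ℓ) :
    Submodule.span F {x : MatCarrier F k |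
      IterProd (mProd F k)
        {y : MatCarrier F k | ∃ u : Matrix (Fin k) (Fin k) F,
          y = Finsupp.single ((0 : ℕ), ℓ - 1) u} x}
      = Rkkl F k ℓ := by
  apply le_antisymm
  · rw [Submodule.span_le]
    refine fun x hx => IterProd.mem_of_subset ?_ (fun u hu v hv => mProd_mem_Rkkl hu hv) hx
    rintro _ ⟨u, rfl⟩
    exact Submodule.subset_span ⟨u, 0, 0, by rw [zero_add]⟩
  · rw [Rkkl, Submodule.span_le]
    rintro _ ⟨u, m, n, rfl⟩
    exact single_mem_span_iterProd hk (by omega) u m (by omega)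
end
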